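/- arXiv:2505.23445 — 3 statements merged into one kernel-verified Lean document; each statement's English description precedes it below -/
import Mathlib

section
/- For η > 0 and b > 1, as m → ∞: ∫_0^{m-η} exp(-g((m-g)/η)^{b-1}) dg = η^{b-1}/m^{b-1} + 2(b-1)η^{2b-2}/m^{2b-1} + 3(b-1)(3b-2)η^{3b-3}/m^{3b-1} + 8(b-1)(2b-1)(4b-3)η^{4b-4}/m^{4b-1} + o(m^{-(4b-1)}). -/
open Filter Asymptotics MeasureTheory Real

/-!
Substituting `g = m t` turns the integral into `m ∫ exp (-N φ(t)) dt` with `φ(t) = t / u(t)`,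
`u(t) = (1 - t) ^ (1 - b)` and the large parameter `N = m ^ b / η ^ (b - 1)`. Only a neighbourhood
of `t = 0` matters. There Lagrange inversion expands `dt` in powers of `φ`,
`dt = ∑ₖ (cₖ / k!) φᵏ dφ`, where `cₖ` is the `k`-th derivative of `uᵏ⁺¹` at `0`. Since
`∫₀^∞ xᵏ exp (-N x) dx = k! / N ^ (k + 1)`, the integral is asymptotic to `m ∑ₖ cₖ / N ^ (k + 1)`,
and for the `u` at hand `cₖ` is the rising factorial of length `k` starting at `(k + 1) (b - 1)`.
-/

open scoped Topology Interval

section Comparison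

lemma rpow_isLittleO_rpow_atTop {p q : ℝ} (hpq : p < q) :
    (fun x : ℝ => x ^ p) =o[atTop] fun x => x ^ q := by
  refine isLittleO_of_tendsto' ?_ ((tendsto_rpow_neg_atTop (sub_pos.2 hpq)).congr' ?_)
  · filter_upwards [eventually_gt_atTop 0] with x hx h
    exact absurd h (rpow_pos_of_pos hx q).ne'
  · filter_upwards [eventually_gt_atTop 0] with x hx
    rw [neg_sub, rpow_sub hx]

lemma exp_neg_mul_isBigO_inv_rpow_div_pow {L c : ℝ} (hL : 0 < L) (hc : c ≠ 0) (b : ℝ) (n : ℕ) :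
    (fun m => exp (-(L * m))) =O[atTop] fun m => ((m ^ b / c) ^ n)⁻¹ := by
  refine ((isLittleO_exp_neg_mul_rpow_atTop hL (-(b * n))).isBigO.const_mul_right
    (pow_ne_zero n hc)).congr' ?_ ?_
  · exact .of_forall fun m => by simp only [neg_mul]
  · filter_upwards [eventually_ge_atTop 0] with m hm
    rw [rpow_neg hm, rpow_mul_natCast hm, div_pow, inv_div, div_eq_mul_inv]

lemma exp_neg_mul_isBigO_inv_pow {L : ℝ} (hL : 0 < L) (n : ℕ) :
    (fun N => exp (-(L * N))) =O[atTop] fun N : ℝ => (N ^ n)⁻¹ := by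
  simpa using exp_neg_mul_isBigO_inv_rpow_div_pow hL one_ne_zero 1 n

end Comparison

section LagrangeInversion

variable {𝕜 : Type*} [NontriviallyNormedField 𝕜]

/-- The numbers `dᵏ(uᵏ⁺¹)/dtᵏ` at `0`. By Lagrange inversion, `lagrangeCoeff u k / k!` is the `k`-th
Taylor coefficient of `dt/dx` for the inverse `x ↦ t` of `t ↦ t / u t`; the factor `k!` is kept
because the moments of the exponential density produce it. -/
noncomputable def lagrangeCoeff (u : 𝕜 → 𝕜) (k : ℕ) : 𝕜 :=
  iteratedDeriv k (fun t => u t ^ (k + 1)) 0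

/-- What is left of the expansion `dt = ∑ (lagrangeCoeff u k / k!) xᵏ dx`, `x = t / u t`, after `n`
terms, as a density with respect to `dt`. -/
noncomputable def lagrangeRemainder (u : 𝕜 → 𝕜) (n : ℕ) (t : 𝕜) : 𝕜 :=
  1 - ∑ k ∈ Finset.range n,
    lagrangeCoeff u k / k.factorial * ((t / u t) ^ k * deriv (fun s => s / u s) t)

lemma iteratedDeriv_pow_mul_zero {f : 𝕜 → 𝕜} {n : ℕ} (k : ℕ) (hf : ContDiffAt 𝕜 n f 0) :
    iteratedDeriv n (fun t => t ^ k * f t) 0 =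
      n.descFactorial k * iteratedDeriv (n - k) f 0 := by
  rw [iteratedDeriv_fun_mul (by fun_prop) hf, Finset.sum_eq_single k]
  · rw [iteratedDeriv_fun_pow_zero, if_pos rfl, Nat.descFactorial_eq_factorial_mul_choose]
    push_cast
    ring
  · intro i _ hik
    rw [iteratedDeriv_fun_pow_zero, if_neg hik]
    simp
  · intro hk
    rw [Nat.choose_eq_zero_of_lt (by simpa using hk)]
    simp

variable {u : 𝕜 → 𝕜}

lemma analyticAt_id_div (hu : AnalyticAt 𝕜 u 0) (hu₀ : u 0 ≠ 0) :
    AnalyticAt 𝕜 (fun t => t / u t) 0 :=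
  analyticAt_id.fun_div hu hu₀

variable [CompleteSpace 𝕜]

lemma iteratedDeriv_natCast_mul_sub_mul_deriv_zero {f : 𝕜 → 𝕜} (hf : AnalyticAt 𝕜 f 0) (n : ℕ) :
    iteratedDeriv n (fun t => n * f t - t * deriv f t) 0 = 0 := by
  have h_euler := iteratedDeriv_pow_mul_zero (n := n) 1 hf.deriv.contDiffAt
  simp only [pow_one, Nat.descFactorial_one] at h_euler
  have h_mul_const : AnalyticAt 𝕜 (fun t => n * f t) 0 := analyticAt_const.fun_mul hf
  have h_mul_deriv : AnalyticAt 𝕜 (fun t => t * deriv f t) 0 := analyticAt_id.fun_mul hf.deriv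
  rw [iteratedDeriv_fun_sub h_mul_const.contDiffAt h_mul_deriv.contDiffAt,
    iteratedDeriv_const_mul_field]
  cases n with
  | zero => simp
  | succ n => simp [h_euler, iteratedDeriv_succ']

lemma eventually_deriv_id_div (hu : AnalyticAt 𝕜 u 0) (hu₀ : u 0 ≠ 0) :
    ∀ᶠ t in 𝓝 0, deriv (fun s => s / u s) t = (u t - t * deriv u t) / u t ^ 2 := by
  filter_upwards [hu.continuousAt.eventually_ne hu₀, hu.eventually_analyticAt] with t ht hut
  simpa using ((hasDerivAt_id t).fun_div hut.differentiableAt.hasDerivAt ht).deriv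

lemma analyticAt_lagrangeRemainder (hu : AnalyticAt 𝕜 u 0) (hu₀ : u 0 ≠ 0) (n : ℕ) :
    AnalyticAt 𝕜 (lagrangeRemainder u n) 0 := by
  have hφ := analyticAt_id_div hu hu₀
  exact analyticAt_const.fun_sub <| Finset.analyticAt_fun_sum _ fun k _ =>
    analyticAt_const.fun_mul ((hφ.fun_pow k).fun_mul hφ.deriv)

variable [CharZero 𝕜]

lemma natCast_le_analyticOrderAt_of_iteratedDeriv_mul_eq_zero {f : 𝕜 → 𝕜} {g : ℕ → 𝕜 → 𝕜} {z₀ : 𝕜}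
    {n : ℕ} (hf : AnalyticAt 𝕜 f z₀) (hg : ∀ m, AnalyticAt 𝕜 (g m) z₀) (hg₀ : ∀ m, g m z₀ ≠ 0)
    (h : ∀ m < n, iteratedDeriv m (fun z => f z * g m z) z₀ = 0) : n ≤ analyticOrderAt f z₀ := by
  have order_mul (m : ℕ) : analyticOrderAt (f * g m) z₀ = analyticOrderAt f z₀ := by
    rw [analyticOrderAt_mul hf (hg m), (hg m).analyticOrderAt_eq_zero.2 (hg₀ m), add_zero]
  induction n with
  | zero => simp
  | succ n ih =>
    have hn := ih fun m hm => h m (hm.trans n.lt_succ_self)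
    rw [← order_mul n, natCast_le_analyticOrderAt_iff_iteratedDeriv_eq_zero (hf.mul (hg n))] at hn ⊢
    intro i hi
    rcases Nat.lt_succ_iff_lt_or_eq.1 hi with hi | rfl
    exacts [hn i hi, h i i.lt_succ_self]

lemma iteratedDeriv_deriv_id_div_mul_pow_zero (hu : AnalyticAt 𝕜 u 0) (hu₀ : u 0 ≠ 0) (j : ℕ) :
    iteratedDeriv j (fun t => deriv (fun s => s / u s) t * u t ^ (j + 1)) 0 =
      if j = 0 then 1 else 0 := by
  have hderiv := eventually_deriv_id_div hu hu₀
  rcases eq_or_ne j 0 with rfl | hj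
  · simp [hderiv.self_of_nhds, field]
  have h_euler : (fun t => deriv (fun s => s / u s) t * u t ^ (j + 1)) =ᶠ[𝓝 0]
      fun t => (j : 𝕜)⁻¹ * (j * u t ^ j - t * deriv (fun s => u s ^ j) t) := by
    filter_upwards [hu.continuousAt.eventually_ne hu₀, hderiv, hu.eventually_analyticAt]
      with t ht hdt hut
    obtain ⟨i, rfl⟩ := Nat.exists_eq_succ_of_ne_zero hj
    have hi : (i + 1 : 𝕜) ≠ 0 := Nat.cast_add_one_ne_zero i
    rw [hdt, deriv_fun_pow hut.differentiableAt]
    push_cast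
    field_simp
    simp only [Nat.succ_eq_add_one]
    ring
  rw [h_euler.iteratedDeriv_eq, iteratedDeriv_const_mul_field,
    iteratedDeriv_natCast_mul_sub_mul_deriv_zero (hu.fun_pow j), mul_zero, if_neg hj]

/- With `φ = t / u`, this derivative is `m!` times the residue at `0` of `φ ^ (k - m - 1) dφ`: the
functionals taking `f` to the `m`-th derivative of `f * u ^ (m + 1)` at `0` are dual, up to `m!`, to
the densities `φ ^ k dφ/dt`. -/
lemma iteratedDeriv_id_div_pow_mul_deriv_mul_pow_zero (hu : AnalyticAt 𝕜 u 0) (hu₀ : u 0 ≠ 0)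
    (m k : ℕ) :
    iteratedDeriv m (fun t => (t / u t) ^ k * deriv (fun s => s / u s) t * u t ^ (m + 1)) 0 =
      if k = m then (m.factorial : 𝕜) else 0 := by
  have h_factor : (fun t => (t / u t) ^ k * deriv (fun s => s / u s) t * u t ^ (m + 1)) =
      fun t => t ^ k * (deriv (fun s => s / u s) t * (u t ^ (m + 1) / u t ^ k)) := by
    funext t
    rw [div_pow]
    ring
  have hcofactor : AnalyticAt 𝕜
      (fun t => deriv (fun s => s / u s) t * (u t ^ (m + 1) / u t ^ k)) 0 :=
    (analyticAt_id_div hu hu₀).deriv.fun_mul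
      ((hu.fun_pow _).fun_div (hu.fun_pow _) (pow_ne_zero _ hu₀))
  rw [h_factor, iteratedDeriv_pow_mul_zero k hcofactor.contDiffAt]
  rcases lt_or_ge m k with hmk | hkm
  · simp [Nat.descFactorial_eq_zero_iff_lt.2 hmk, hmk.ne']
  obtain ⟨j, rfl⟩ := Nat.exists_eq_add_of_le hkm
  have h_cancel : (fun t => deriv (fun s => s / u s) t * (u t ^ (k + j + 1) / u t ^ k)) =ᶠ[𝓝 0]
      fun t => deriv (fun s => s / u s) t * u t ^ (j + 1) := by
    filter_upwards [hu.continuousAt.eventually_ne hu₀] with t ht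
    rw [add_assoc, pow_add, mul_div_cancel_left₀ _ (pow_ne_zero k ht)]
  rw [h_cancel.iteratedDeriv_eq, Nat.add_sub_cancel_left,
    iteratedDeriv_deriv_id_div_mul_pow_zero hu hu₀]
  rcases eq_or_ne j 0 with rfl | hj
  · simp [Nat.descFactorial_self]
  · simp [hj]

theorem natCast_le_analyticOrderAt_lagrangeRemainder (hu : AnalyticAt 𝕜 u 0) (hu₀ : u 0 ≠ 0)
    (n : ℕ) :
    n ≤ analyticOrderAt (lagrangeRemainder u n) 0 := by
  have hφ := analyticAt_id_div hu hu₀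
  refine natCast_le_analyticOrderAt_of_iteratedDeriv_mul_eq_zero (g := fun m t => u t ^ (m + 1))
    (analyticAt_lagrangeRemainder hu hu₀ n) (fun m => hu.fun_pow _) (fun m => pow_ne_zero _ hu₀)
    fun m hm => ?_
  have h_expand : (fun t => lagrangeRemainder u n t * u t ^ (m + 1)) =
      fun t => u t ^ (m + 1) - ∑ k ∈ Finset.range n, lagrangeCoeff u k / k.factorial *
        ((t / u t) ^ k * deriv (fun s => s / u s) t * u t ^ (m + 1)) := by
    funext t
    rw [lagrangeRemainder, sub_mul, one_mul, Finset.sum_mul]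
    simp only [mul_assoc]
  have h_term (k : ℕ) : AnalyticAt 𝕜 (fun t => lagrangeCoeff u k / k.factorial *
      ((t / u t) ^ k * deriv (fun s => s / u s) t * u t ^ (m + 1))) 0 :=
    analyticAt_const.fun_mul (((hφ.fun_pow k).fun_mul hφ.deriv).fun_mul (hu.fun_pow _))
  rw [h_expand, iteratedDeriv_fun_sub (hu.fun_pow _).contDiffAt
    (Finset.analyticAt_fun_sum _ fun k _ => h_term k).contDiffAt,
    iteratedDeriv_fun_sum fun k _ => (h_term k).contDiffAt]
  simp only [iteratedDeriv_const_mul_field,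
    iteratedDeriv_id_div_pow_mul_deriv_mul_pow_zero hu hu₀, mul_ite, mul_zero,
    Finset.sum_ite_eq', Finset.mem_range, if_pos hm]
  rw [div_mul_cancel₀ _ (Nat.cast_ne_zero.2 m.factorial_ne_zero), lagrangeCoeff, sub_self]

theorem lagrangeRemainder_isBigO (hu : AnalyticAt 𝕜 u 0) (hu₀ : u 0 ≠ 0) (n : ℕ) :
    lagrangeRemainder u n =O[𝓝 0] fun t => t ^ n := by
  obtain ⟨g, hg, hgn⟩ := (natCast_le_analyticOrderAt (analyticAt_lagrangeRemainder hu hu₀ n)).1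
    (natCast_le_analyticOrderAt_lagrangeRemainder hu hu₀ n)
  refine ((isBigO_refl (fun t : 𝕜 => t ^ n) (𝓝 0)).mul (hg.continuousAt.isBigO_one 𝕜)).congr' ?_ ?_
  · filter_upwards [hgn] with t ht
    simp [ht]
  · exact .of_forall fun t => mul_one _

end LagrangeInversion

section Laplace

lemma integrableOn_pow_mul_exp_neg_mul_Ioi (k : ℕ) {N : ℝ} (hN : 0 < N) :
    IntegrableOn (fun x => x ^ k * exp (-(N * x))) (Set.Ioi 0) := by
  have hk : (-1 : ℝ) < k := neg_one_lt_zero.trans_le k.cast_nonneg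
  simpa using integrableOn_rpow_mul_exp_neg_mul_rpow hk one_pos hN

lemma integral_pow_mul_exp_neg_mul_Ioi (k : ℕ) {N : ℝ} (hN : 0 < N) :
    ∫ x in Set.Ioi 0, x ^ k * exp (-(N * x)) = k.factorial / N ^ (k + 1) := by
  have h := integral_rpow_mul_exp_neg_mul_Ioi (k.cast_add_one_pos (α := ℝ)) hN
  rw [Gamma_nat_eq_factorial, add_sub_cancel_right, ← Nat.cast_succ, rpow_natCast] at h
  simp only [rpow_natCast] at h
  rw [h, div_pow, one_pow, one_div_mul_eq_div]

lemma integral_Ioi_pow_mul_exp_neg_mul_isBigO (k : ℕ) {L : ℝ} (hL : 0 ≤ L) :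
    (fun N => ∫ x in Set.Ioi L, x ^ k * exp (-(N * x))) =O[atTop] fun N => exp (-(L * N)) := by
  have integrable {N : ℝ} (hN : 0 < N) :=
    (integrableOn_pow_mul_exp_neg_mul_Ioi k hN).mono_set (Set.Ioi_subset_Ioi hL)
  refine IsBigO.of_bound (exp L * ∫ x in Set.Ioi L, x ^ k * exp (-(1 * x))) ?_
  filter_upwards [eventually_ge_atTop 1] with N hN
  have hpos {x : ℝ} (hx : x ∈ Set.Ioi L) : 0 ≤ x := hL.trans (Set.mem_Ioi.1 hx).le
  rw [norm_of_nonneg (setIntegral_nonneg measurableSet_Ioi fun x hx => by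
    have := hpos hx; positivity), norm_of_nonneg (exp_nonneg _)]
  calc ∫ x in Set.Ioi L, x ^ k * exp (-(N * x))
      ≤ ∫ x in Set.Ioi L, exp (L - L * N) * (x ^ k * exp (-(1 * x))) := by
        refine setIntegral_mono_on (integrable (by linarith))
          ((integrable one_pos).const_mul _) measurableSet_Ioi fun x hx => ?_
        have h_exp : exp (-(N * x)) ≤ exp (L - L * N) * exp (-(1 * x)) := by
          rw [← exp_add]
          exact exp_le_exp.2 (by nlinarith [Set.mem_Ioi.1 hx])
        nlinarith [pow_nonneg (hpos hx) k]
    _ = exp L * (∫ x in Set.Ioi L, x ^ k * exp (-(1 * x))) * exp (-(L * N)) := by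
        rw [integral_const_mul, sub_eq_add_neg, exp_add]
        ring

lemma integral_pow_mul_exp_neg_mul_sub_isBigO (k : ℕ) {L : ℝ} (hL : 0 ≤ L) :
    (fun N => (∫ x in 0..L, x ^ k * exp (-(N * x))) - k.factorial / N ^ (k + 1)) =O[atTop]
      fun N => exp (-(L * N)) := by
  refine (integral_Ioi_pow_mul_exp_neg_mul_isBigO k hL).neg_left.congr' ?_ .rfl
  filter_upwards [eventually_gt_atTop 0] with N hN
  have integrable := integrableOn_pow_mul_exp_neg_mul_Ioi k hN
  rw [← integral_pow_mul_exp_neg_mul_Ioi k hN,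
    ← intervalIntegral.integral_interval_add_Ioi integrable
      (integrable.mono_set (Set.Ioi_subset_Ioi hL)), sub_add_cancel_left]

variable {φ φ' : ℝ → ℝ} {T : ℝ}

lemma integral_pow_mul_deriv_mul_exp_neg_mul (hφ : ∀ t ∈ [[0, T]], HasDerivAt φ (φ' t) t)
    (hφ' : ContinuousOn φ' [[0, T]]) (hφ₀ : φ 0 = 0) (k : ℕ) (N : ℝ) :
    ∫ t in 0..T, φ t ^ k * φ' t * exp (-(N * φ t)) = ∫ x in 0..φ T, x ^ k * exp (-(N * x)) := by
  have h := intervalIntegral.integral_comp_mul_deriv (g := fun x => x ^ k * exp (-(N * x)))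
    hφ hφ' (by fun_prop)
  rw [hφ₀] at h
  rw [← h]
  congr! 2 with t
  simp only [Function.comp_apply]
  ring

variable {δ C : ℝ} {n : ℕ}

lemma abs_integral_mul_exp_neg_mul_le {r : ℝ → ℝ} (hT : 0 < T) (hδ : 0 < δ)
    (hφ : ∀ t ∈ Set.Ioc 0 T, δ * t ≤ φ t) (hr : ∀ t ∈ Set.Ioc 0 T, |r t| ≤ C * t ^ n)
    {N : ℝ} (hN : 0 < N) :
    |∫ t in 0..T, r t * exp (-(N * φ t))| ≤ C * (n.factorial / (δ * N) ^ (n + 1)) := by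
  have hC : 0 ≤ C := nonneg_of_mul_nonneg_left
    ((abs_nonneg _).trans (hr T (Set.right_mem_Ioc.2 hT))) (pow_pos hT n)
  have integrable := integrableOn_pow_mul_exp_neg_mul_Ioi n (mul_pos hδ hN)
  have h_bound (t : ℝ) (ht : t ∈ Set.Ioc 0 T) :
      ‖r t * exp (-(N * φ t))‖ ≤ C * (t ^ n * exp (-(δ * N * t))) := by
    rw [norm_mul, norm_of_nonneg (exp_nonneg _), ← mul_assoc]
    exact mul_le_mul (hr t ht) (exp_le_exp.2 (by nlinarith [hφ t ht])) (exp_nonneg _)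
      ((abs_nonneg _).trans (hr t ht))
  calc |∫ t in 0..T, r t * exp (-(N * φ t))|
      ≤ ∫ t in 0..T, C * (t ^ n * exp (-(δ * N * t))) :=
        intervalIntegral.norm_integral_le_of_norm_le hT.le (ae_of_all _ h_bound)
          (Continuous.intervalIntegrable (by fun_prop) _ _)
    _ = C * ∫ t in Set.Ioc 0 T, t ^ n * exp (-(δ * N * t)) := by
        rw [intervalIntegral.integral_const_mul, intervalIntegral.integral_of_le hT.le]
    _ ≤ C * ∫ t in Set.Ioi 0, t ^ n * exp (-(δ * N * t)) := by
        refine mul_le_mul_of_nonneg_left (setIntegral_mono_set integrable ?_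
          Set.Ioc_subset_Ioi_self.eventuallyLE) hC
        filter_upwards [ae_restrict_mem measurableSet_Ioi] with t ht
        have : 0 < t := ht
        positivity
    _ = C * (n.factorial / (δ * N) ^ (n + 1)) := by
        rw [integral_pow_mul_exp_neg_mul_Ioi n (mul_pos hδ hN)]

lemma integral_mul_exp_neg_mul_isBigO {r : ℝ → ℝ} (hT : 0 < T) (hδ : 0 < δ)
    (hφδ : ∀ t ∈ Set.Ioc 0 T, δ * t ≤ φ t) (hr : ∀ t ∈ Set.Ioc 0 T, |r t| ≤ C * t ^ n) :
    (fun N => ∫ t in 0..T, r t * exp (-(N * φ t))) =O[atTop] fun N => (N ^ (n + 1))⁻¹ := by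
  refine IsBigO.of_bound (C * (n.factorial / δ ^ (n + 1))) ?_
  filter_upwards [eventually_gt_atTop 0] with N hN
  refine (abs_integral_mul_exp_neg_mul_le hT hδ hφδ hr hN).trans_eq ?_
  rw [norm_of_nonneg (by positivity), mul_pow]
  field_simp

lemma integral_sum_mul_exp_neg_mul (hφ : ∀ t ∈ [[0, T]], HasDerivAt φ (φ' t) t)
    (hφ' : ContinuousOn φ' [[0, T]]) (hφ₀ : φ 0 = 0) (c : ℕ → ℝ) (n : ℕ) (N : ℝ) :
    ∫ t in 0..T, (∑ k ∈ Finset.range n, c k * (φ t ^ k * φ' t)) * exp (-(N * φ t)) =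
      ∑ k ∈ Finset.range n, c k * ∫ x in 0..φ T, x ^ k * exp (-(N * x)) := by
  have hφc : ContinuousOn φ [[0, T]] := fun t ht => (hφ t ht).continuousAt.continuousWithinAt
  simp only [Finset.sum_mul, mul_assoc (c _)]
  rw [intervalIntegral.integral_finsetSum fun k _ =>
    ContinuousOn.intervalIntegrable (by fun_prop)]
  simp only [intervalIntegral.integral_const_mul,
    integral_pow_mul_deriv_mul_exp_neg_mul hφ hφ' hφ₀]

theorem integral_mul_exp_neg_mul_sub_sum_isBigO {f : ℝ → ℝ} {c : ℕ → ℝ} (hT : 0 < T) (hδ : 0 < δ)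
    (hφ : ∀ t ∈ [[0, T]], HasDerivAt φ (φ' t) t) (hφ' : ContinuousOn φ' [[0, T]]) (hφ₀ : φ 0 = 0)
    (hφδ : ∀ t ∈ Set.Ioc 0 T, δ * t ≤ φ t) (hf : ContinuousOn f [[0, T]])
    (hfc : ∀ t ∈ Set.Ioc 0 T,
      |f t - ∑ k ∈ Finset.range n, c k * (φ t ^ k * φ' t)| ≤ C * t ^ n) :
    (fun N => (∫ t in 0..T, f t * exp (-(N * φ t))) -
        ∑ k ∈ Finset.range n, c k * (k.factorial / N ^ (k + 1))) =O[atTop]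
      fun N => (N ^ (n + 1))⁻¹ := by
  have hφc : ContinuousOn φ [[0, T]] := fun t ht => (hφ t ht).continuousAt.continuousWithinAt
  have hφT : 0 < φ T := (mul_pos hδ hT).trans_le (hφδ T (Set.right_mem_Ioc.2 hT))
  have h_moments (k : ℕ) : (fun N => c k * ((∫ x in 0..φ T, x ^ k * exp (-(N * x))) -
      k.factorial / N ^ (k + 1))) =O[atTop] fun N => (N ^ (n + 1))⁻¹ :=
    ((integral_pow_mul_exp_neg_mul_sub_isBigO k hφT.le).trans
      (exp_neg_mul_isBigO_inv_pow hφT _)).const_mul_left _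
  refine ((integral_mul_exp_neg_mul_isBigO hT hδ hφδ hfc).add
    (IsBigO.fun_sum (s := Finset.range n) fun k _ => h_moments k)).congr_left fun N => ?_
  simp only [sub_mul (f _), mul_sub, Finset.sum_sub_distrib]
  rw [intervalIntegral.integral_sub (ContinuousOn.intervalIntegrable (by fun_prop))
    (ContinuousOn.intervalIntegrable (by fun_prop)), integral_sum_mul_exp_neg_mul hφ hφ' hφ₀,
    sub_add_sub_cancel]

theorem eventually_integral_exp_neg_mul_id_div_sub_sum_isBigO {u : ℝ → ℝ} (hu : AnalyticAt ℝ u 0)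
    (hu₀ : 0 < u 0) (n : ℕ) :
    ∀ᶠ T in 𝓝[>] 0, (fun N => (∫ t in 0..T, exp (-(N * (t / u t)))) -
        ∑ k ∈ Finset.range n, lagrangeCoeff u k / N ^ (k + 1)) =O[atTop]
      fun N => (N ^ (n + 1))⁻¹ := by
  obtain ⟨C, hC⟩ := (lagrangeRemainder_isBigO hu hu₀.ne' n).bound
  have h_near : ∀ᶠ t in 𝓝 0, AnalyticAt ℝ (fun s => s / u s) t ∧ u t ∈ Set.Ioo 0 (2 * u 0) ∧
      ‖lagrangeRemainder u n t‖ ≤ C * ‖t ^ n‖ :=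
    (analyticAt_id_div hu hu₀.ne').eventually_analyticAt.and
      ((hu.continuousAt.eventually (Ioo_mem_nhds hu₀ (by linarith))).and hC)
  have h_uIcc : Tendsto (fun T : ℝ => [[0, T]]) (𝓝[>] 0) (𝓝 0).smallSets :=
    tendsto_const_nhds.uIcc (tendsto_id.mono_left nhdsWithin_le_nhds)
  filter_upwards [h_uIcc.eventually (eventually_smallSets_forall.2 h_near), self_mem_nhdsWithin]
    with T hT (hT₀ : 0 < T)
  have hIoc : Set.Ioc 0 T ⊆ [[0, T]] := Set.uIoc_of_le hT₀.le ▸ Set.uIoc_subset_uIcc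
  refine (integral_mul_exp_neg_mul_sub_sum_isBigO (φ := fun t => t / u t) (f := fun _ => 1)
    (c := fun k => lagrangeCoeff u k / k.factorial) (δ := (2 * u 0)⁻¹) (C := C) (n := n) hT₀
    (by positivity) (fun t ht => (hT t ht).1.differentiableAt.hasDerivAt)
    (fun t ht => (hT t ht).1.deriv.continuousAt.continuousWithinAt) (zero_div _)
    (fun t ht => ?_) continuousOn_const fun t ht => ?_).congr_left fun N => ?_
  · obtain ⟨-, ⟨hut, hut'⟩, -⟩ := hT t (hIoc ht)
    rw [inv_mul_eq_div]
    exact div_le_div_of_nonneg_left ht.1.le hut hut'.le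
  · simpa [lagrangeRemainder, abs_of_pos ht.1] using (hT t (hIoc ht)).2.2
  · have h_cancel (k : ℕ) (x y : ℝ) : x / k.factorial * (k.factorial / y) = x / y :=
      div_mul_div_cancel₀ (Nat.cast_ne_zero.2 k.factorial_ne_zero)
    simp only [one_mul, h_cancel]

end Laplace

section OneSubRpow

lemma iteratedDeriv_one_sub_rpow_neg_zero (s : ℝ) (k : ℕ) :
    iteratedDeriv k (fun t : ℝ => (1 - t) ^ (-s)) 0 = (ascPochhammer ℝ k).eval s := by
  rw [iteratedDeriv_comp_const_sub (f := fun x : ℝ => x ^ (-s))]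
  simp only [iteratedDeriv_eq_iterate, iter_deriv_rpow_const, sub_zero, one_rpow, mul_one,
    smul_eq_mul]
  rw [← ascPochhammer_eval_neg_eq_descPochhammer, neg_neg]

lemma lagrangeCoeff_one_sub_rpow_neg (a : ℝ) (k : ℕ) :
    lagrangeCoeff (fun t : ℝ => (1 - t) ^ (-a)) k = (ascPochhammer ℝ k).eval ((k + 1) * a) := by
  have h_pow : (fun t : ℝ => ((1 - t) ^ (-a)) ^ (k + 1)) =ᶠ[𝓝 0]
      fun t => (1 - t) ^ (-((k + 1) * a)) := by
    filter_upwards [eventually_lt_nhds one_pos] with t ht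
    rw [← rpow_mul_natCast (by linarith)]
    push_cast
    ring_nf
  rw [lagrangeCoeff, h_pow.iteratedDeriv_eq, iteratedDeriv_one_sub_rpow_neg_zero]

lemma analyticAt_one_sub_rpow (a : ℝ) : AnalyticAt ℝ (fun t : ℝ => (1 - t) ^ a) 0 :=
  ((contDiffAt_const.sub contDiffAt_id).rpow_const_of_ne (by simp)).analyticAt

lemma intervalIntegrable_exp_neg_mul_id_div_one_sub_rpow {x y : ℝ} (hx : x < 1) (hy : y < 1)
    (a N : ℝ) :
    IntervalIntegrable (fun t => exp (-(N * (t / (1 - t) ^ a)))) volume x y := by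
  refine ContinuousOn.intervalIntegrable fun t ht => ContinuousAt.continuousWithinAt ?_
  have ht₁ : 0 < 1 - t := sub_pos.2 (ht.2.trans_lt (max_lt hx hy))
  have h_rpow : ContinuousAt (fun t : ℝ => (1 - t) ^ a) t :=
    ContinuousAt.rpow_const (by fun_prop) (.inl ht₁.ne')
  exact ((continuousAt_id.div h_rpow (rpow_pos_of_pos ht₁ a).ne').const_mul N).neg.rexp

lemma abs_integral_exp_neg_mul_id_div_one_sub_rpow_neg_le {a T ε N : ℝ} (hT : 0 ≤ T) (hN : 0 ≤ N)
    (hε : 0 < ε) (hTε : T ≤ 1 - ε) :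
    |∫ t in T..1 - ε, exp (-(N * (t / (1 - t) ^ (-a))))| ≤
      exp (-(T * N)) + exp (-(T * (N * ε ^ a))) := by
  have h_bound (t : ℝ) (ht : t ∈ Ι T (1 - ε)) : ‖exp (-(N * (t / (1 - t) ^ (-a))))‖ ≤
      exp (-(T * N)) + exp (-(T * (N * ε ^ a))) := by
    rw [Set.uIoc_of_le hTε] at ht
    have hTt : T * N ≤ N * t := by nlinarith [ht.1]
    have hNt : 0 ≤ N * t := mul_nonneg hN (hT.trans ht.1.le)
    rw [norm_of_nonneg (exp_nonneg _), rpow_neg (by linarith [ht.2]), div_inv_eq_mul]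
    rcases le_total 0 a with ha | ha
    · have h_rpow : ε ^ a ≤ (1 - t) ^ a := rpow_le_rpow hε.le (by linarith [ht.2]) ha
      refine le_add_of_nonneg_of_le (exp_nonneg _) (exp_le_exp.2 (neg_le_neg ?_))
      calc T * (N * ε ^ a) = T * N * ε ^ a := by ring
        _ ≤ N * t * (1 - t) ^ a := by gcongr
        _ = N * (t * (1 - t) ^ a) := by ring
    · have h_rpow : 1 ≤ (1 - t) ^ a :=
        one_le_rpow_of_pos_of_le_one_of_nonpos (by linarith [ht.2]) (by linarith [ht.1]) ha
      refine le_add_of_le_of_nonneg (exp_le_exp.2 (neg_le_neg ?_)) (exp_nonneg _)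
      calc T * N ≤ N * t * 1 := by simpa using hTt
        _ ≤ N * t * (1 - t) ^ a := by gcongr
        _ = N * (t * (1 - t) ^ a) := by ring
  refine (intervalIntegral.norm_integral_le_of_norm_le_const h_bound).trans
    (mul_le_of_le_one_right (by positivity) ?_)
  rw [abs_of_nonneg (by linarith)]
  linarith

lemma rpow_div_rpow_mul_div_rpow_self {η m : ℝ} (hη : 0 < η) (hm : 0 < m) (b : ℝ) :
    m ^ b / η ^ (b - 1) * (η / m) ^ (b - 1) = m := by
  have := rpow_pos_of_pos hη (b - 1)
  have := rpow_pos_of_pos hm (b - 1)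
  rw [div_rpow hη.le hm.le, rpow_sub_one hm.ne' b]
  field_simp

lemma integral_exp_neg_mul_rpow_eq_mul {η m : ℝ} (hη : 0 < η) (hm : η ≤ m) (b : ℝ) :
    ∫ g in Set.Ioc 0 (m - η), exp (-g * ((m - g) / η) ^ (b - 1)) =
      m * ∫ t in 0..1 - η / m,
        exp (-(m ^ b / η ^ (b - 1) * (t / (1 - t) ^ (-(b - 1))))) := by
  have hm₀ : 0 < m := hη.trans_le hm
  have h_end : m - η = m * (1 - η / m) := by field_simp
  have h_nonneg : 0 ≤ 1 - η / m := by rw [sub_nonneg, div_le_one hm₀]; exact hm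
  rw [← intervalIntegral.integral_of_le (sub_nonneg.2 hm), h_end, ← mul_zero m,
    ← intervalIntegral.mul_integral_comp_mul_left, mul_zero]
  congr 1
  refine intervalIntegral.integral_congr fun t ht => ?_
  rw [Set.uIcc_of_le h_nonneg] at ht
  have ht₁ : 0 ≤ 1 - t := by have := div_pos hη hm₀; linarith [ht.2]
  have h_split : ((m - m * t) / η) ^ (b - 1) = m ^ (b - 1) * (1 - t) ^ (b - 1) / η ^ (b - 1) := by
    rw [← mul_one_sub, div_rpow (by positivity) hη.le, mul_rpow hm₀.le ht₁]
  simp only [h_split, rpow_neg ht₁, div_inv_eq_mul, rpow_sub_one hm₀.ne' b]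
  congr 1
  field_simp

lemma mul_inv_rpow_div_rpow_pow {η m : ℝ} (hη : 0 < η) (hm : 0 < m) (b : ℝ) (k : ℕ) :
    m * ((m ^ b / η ^ (b - 1)) ^ (k + 1))⁻¹ = η ^ ((k + 1) * (b - 1)) / m ^ ((k + 1) * b - 1) := by
  have h_pow {x : ℝ} (hx : 0 < x) (y : ℝ) : (x ^ y) ^ (k + 1) = x ^ ((k + 1) * y) := by
    rw [← rpow_mul_natCast hx.le, mul_comm, Nat.cast_succ]
  rw [div_pow, inv_div, h_pow hm, h_pow hη, rpow_sub_one hm.ne']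
  field_simp

lemma integral_tail_exp_neg_mul_id_div_one_sub_rpow_neg_isBigO {T η b : ℝ} (hT : T ∈ Set.Ioo 0 1)
    (hη : 0 < η) (hb : 0 < b) (n : ℕ) :
    (fun m => ∫ t in T..1 - η / m, exp (-(m ^ b / η ^ (b - 1) * (t / (1 - t) ^ (-(b - 1))))))
      =O[atTop] fun m => ((m ^ b / η ^ (b - 1)) ^ n)⁻¹ := by
  have h_scale := (tendsto_rpow_atTop hb).atTop_div_const (rpow_pos_of_pos hη (b - 1))
  refine IsBigO.trans (IsBigO.of_bound' ?_)
    (((exp_neg_mul_isBigO_inv_pow hT.1 n).comp_tendsto h_scale).add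
      (exp_neg_mul_isBigO_inv_rpow_div_pow hT.1 (rpow_pos_of_pos hη _).ne' b n))
  have h_end := (tendsto_const_nhds (x := η)).div_atTop tendsto_id
  filter_upwards [eventually_gt_atTop 0, h_end.eventually (eventually_lt_nhds (sub_pos.2 hT.2))]
    with m hm (hmT : η / m < 1 - T)
  refine (abs_integral_exp_neg_mul_id_div_one_sub_rpow_neg_le (N := m ^ b / η ^ (b - 1)) hT.1.le
    (by positivity) (div_pos hη hm) (by linarith)).trans ?_
  rw [rpow_div_rpow_mul_div_rpow_self hη hm]
  exact le_abs_self _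

lemma integral_exp_neg_mul_id_div_one_sub_rpow_neg_sub_sum_isBigO {η b : ℝ} (hη : 0 < η)
    (hb : 0 < b) (n : ℕ) :
    (fun m => (∫ t in 0..1 - η / m, exp (-(m ^ b / η ^ (b - 1) * (t / (1 - t) ^ (-(b - 1)))))) -
        ∑ k ∈ Finset.range n, (ascPochhammer ℝ k).eval ((k + 1) * (b - 1)) /
          (m ^ b / η ^ (b - 1)) ^ (k + 1)) =O[atTop]
      fun m => ((m ^ b / η ^ (b - 1)) ^ (n + 1))⁻¹ := by
  obtain ⟨T, hT_expansion, hT⟩ := ((eventually_integral_exp_neg_mul_id_div_sub_sum_isBigO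
    (analyticAt_one_sub_rpow (-(b - 1))) (by simp) n).and (Ioo_mem_nhdsGT one_pos)).exists
  have h_scale := (tendsto_rpow_atTop hb).atTop_div_const (rpow_pos_of_pos hη (b - 1))
  refine ((hT_expansion.comp_tendsto h_scale).add
    (integral_tail_exp_neg_mul_id_div_one_sub_rpow_neg_isBigO hT hη hb (n + 1))).congr' ?_ .rfl
  filter_upwards [eventually_gt_atTop 0] with m hm
  have h_end : 1 - η / m < 1 := sub_lt_self 1 (div_pos hη hm)
  simp only [Function.comp_apply, lagrangeCoeff_one_sub_rpow_neg]
  rw [← intervalIntegral.integral_add_adjacent_intervals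
    (intervalIntegrable_exp_neg_mul_id_div_one_sub_rpow one_pos hT.2 _ _)
    (intervalIntegrable_exp_neg_mul_id_div_one_sub_rpow hT.2 h_end _ _)]
  ring

end OneSubRpow

lemma sum_range_four_ascPochhammer_eval (η b m : ℝ) :
    ∑ k ∈ Finset.range 4, (ascPochhammer ℝ k).eval ((k + 1) * (b - 1)) *
        η ^ ((k + 1) * (b - 1)) / m ^ ((k + 1) * b - 1) =
      η ^ (b - 1) / m ^ (b - 1)
        + 2 * (b - 1) * η ^ (2 * b - 2) / m ^ (2 * b - 1)
        + 3 * (b - 1) * (3 * b - 2) * η ^ (3 * b - 3) / m ^ (3 * b - 1)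
        + 8 * (b - 1) * (2 * b - 1) * (4 * b - 3) * η ^ (4 * b - 4) / m ^ (4 * b - 1) := by
  simp only [Finset.sum_range_succ, Finset.range_one, Finset.sum_singleton, Nat.cast_zero, zero_add,
    one_mul, ascPochhammer_zero, Polynomial.eval_one, Nat.cast_one, ascPochhammer_one,
    Polynomial.eval_X, Nat.cast_ofNat, ascPochhammer_succ_eval]
  ring_nf

theorem integral_exp_expansion_general (η b : ℝ) (hη : 0 < η) (hb : 0 < b) (n : ℕ) :
    (fun m : ℝ => (∫ g in Set.Ioc 0 (m - η), exp (-g * ((m - g) / η) ^ (b - 1))) -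
        ∑ k ∈ Finset.range n, (ascPochhammer ℝ k).eval ((k + 1) * (b - 1)) *
          η ^ ((k + 1) * (b - 1)) / m ^ ((k + 1) * b - 1)) =O[atTop]
      fun m => m ^ (-((n + 1) * b - 1)) := by
  have h_scaled := (isBigO_refl (fun m : ℝ => m) atTop).mul
    (integral_exp_neg_mul_id_div_one_sub_rpow_neg_sub_sum_isBigO hη hb n)
  have h_error : (fun m => m * ((m ^ b / η ^ (b - 1)) ^ (n + 1))⁻¹) =O[atTop]
      fun m => m ^ (-((n + 1) * b - 1)) := by
    refine ((isBigO_refl _ _).const_mul_left (η ^ ((n + 1) * (b - 1)))).congr' ?_ .rfl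
    filter_upwards [eventually_gt_atTop 0] with m hm
    rw [mul_inv_rpow_div_rpow_pow hη hm, rpow_neg hm.le, div_eq_mul_inv]
  refine (h_scaled.trans h_error).congr' ?_ .rfl
  filter_upwards [eventually_ge_atTop η] with m hm
  rw [integral_exp_neg_mul_rpow_eq_mul hη hm, mul_sub, Finset.mul_sum]
  congr! 2 with k
  rw [div_eq_mul_inv, mul_left_comm, mul_inv_rpow_div_rpow_pow hη (hη.trans_le hm), mul_div_assoc]

/-- Asymptotic expansion, for `η > 0` and `b > 1`, of
`∫_0^{m-η} exp(-g((m-g)/η)^{b-1}) dg` as `m → ∞`. -/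
theorem integral_exp_expansion (η b : ℝ) (hη : 0 < η) (hb : 1 < b) :
    (fun m : ℝ =>
        (∫ g in Set.Ioc (0 : ℝ) (m - η), Real.exp (-g * ((m - g) / η) ^ (b - 1))) -
          (η ^ (b - 1) / m ^ (b - 1)
            + 2 * (b - 1) * η ^ (2 * b - 2) / m ^ (2 * b - 1)
            + 3 * (b - 1) * (3 * b - 2) * η ^ (3 * b - 3) / m ^ (3 * b - 1)
            + 8 * (b - 1) * (2 * b - 1) * (4 * b - 3) * η ^ (4 * b - 4) / m ^ (4 * b - 1)))
      =o[atTop] (fun m : ℝ => m ^ (-(4 * b - 1))) := by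
  simp only [← sum_range_four_ascPochhammer_eval]
  exact (integral_exp_expansion_general η b hη (by linarith) 4).trans_isLittleO
    (rpow_isLittleO_rpow_atTop (by norm_num; linarith))
end

section
/- For η > 0 and b > 1, as m → ∞: ∫_0^{m-η} g·exp(-g((m-g)/η)^{b-1}) dg = η^{2b-2}/m^{2b-2} + 6(b-1)η^{3b-3}/m^{3b-2} + 12(b-1)(4b-3)η^{4b-4}/m^{4b-2} + o(m^{-(4b-2)}). -/
open Filter Asymptotics MeasureTheory Real

open Set
open scoped Nat Topology

/-!
Put `l = (m / η) ^ c` with `c = b - 1`, `T = l * g` and `s = g / m`, so that the integrand is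
`g ^ n * exp (-T * (1 - s) ^ c)` with `n = 1`. Near `s = 0` it is expanded to second order in `s`
at fixed `T`: while `|1 - (1 - s) ^ c| ≤ 1 / 2`, the remainder is `O(g ^ n * s ^ 3 * exp (-T / 4))`.
For `s ≥ σ > 0` the integrand is at most `g ^ n * (exp (-T) + exp (-g))` and its expansion is
`O(g ^ n * s ^ 2 * exp (-T / 4))`; powers of `s / σ ≥ 1` give both bounds the form of the remainder.
Everything can therefore be integrated over the whole half-line, where
`∫ g ^ k * exp (-r * g) = k! / r ^ (k + 1)`: the expansion gives the three main terms, and the error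
is of order `l ^ (-(n + 4)) * m ^ (-3)`.
-/

theorem isLittleO_rpow_rpow_atTop {s t : ℝ} (hst : s < t) :
    (fun x : ℝ ↦ x ^ s) =o[atTop] fun x ↦ x ^ t := by
  refine isLittleO_of_tendsto' ?_ ?_
  · filter_upwards [eventually_gt_atTop 0] with x hx hxt
    exact absurd hxt (rpow_pos_of_pos hx t).ne'
  · refine (tendsto_rpow_neg_atTop (sub_pos.2 hst)).congr' ?_
    filter_upwards [eventually_gt_atTop 0] with x hx
    rw [← rpow_sub hx, neg_sub]

theorem integrableOn_pow_mul_exp_neg_mul_Ioi_s17 (n : ℕ) {r : ℝ} (hr : 0 < r) :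
    IntegrableOn (fun x : ℝ ↦ x ^ n * exp (-(r * x))) (Ioi 0) := by
  simpa using integrableOn_rpow_mul_exp_neg_mul_rpow (s := n) (p := 1)
    (by linarith [n.cast_nonneg (α := ℝ)]) one_pos hr

theorem integral_pow_mul_exp_neg_mul_Ioi_s17 (n : ℕ) {r : ℝ} (hr : 0 < r) :
    ∫ x in Ioi (0 : ℝ), x ^ n * exp (-(r * x)) = n ! / r ^ (n + 1) := by
  have h := integral_rpow_mul_exp_neg_mul_Ioi (a := n + 1) (by positivity) hr
  simp only [add_sub_cancel_right, rpow_natCast, Gamma_nat_eq_factorial] at h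
  rw [h, ← Nat.cast_add_one, rpow_natCast, one_div, inv_pow, div_eq_inv_mul]

theorem pow_mul_exp_neg_half_le (k : ℕ) {T : ℝ} (hT : 0 ≤ T) :
    T ^ k * exp (-T / 2) ≤ k ! * 4 ^ k * exp (-T / 4) := by
  have hpow : T ^ k ≤ k ! * 4 ^ k * exp (T / 4) := by
    have h := pow_div_factorial_le_exp (x := T / 4) (by positivity) k
    rw [div_pow, div_div, div_le_iff₀ (by positivity)] at h
    linarith
  calc T ^ k * exp (-T / 2)
      ≤ k ! * 4 ^ k * exp (T / 4) * exp (-T / 2) := by gcongr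
    _ = k ! * 4 ^ k * exp (-T / 4) := by rw [mul_assoc, ← exp_add]; ring_nf

theorem pow_mul_exp_neg_le (k : ℕ) {T : ℝ} (hT : 0 ≤ T) :
    T ^ k * exp (-T) ≤ k ! * 4 ^ k * exp (-T / 4) := by
  refine le_trans ?_ (pow_mul_exp_neg_half_le k hT)
  gcongr
  linarith

theorem abs_exp_sub_quadratic_le (v : ℝ) :
    |exp v - (1 + v + v ^ 2 / 2)| ≤ |v| ^ 3 * exp |v| := by
  have h := Complex.norm_exp_sub_sum_le_norm_mul_exp v 3
  have hcast : Complex.exp v - ∑ i ∈ Finset.range 3, (v : ℂ) ^ i / i !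
      = ((exp v - (1 + v + v ^ 2 / 2) : ℝ) : ℂ) := by
    simp [Finset.sum_range_succ]
  rwa [hcast, Complex.norm_real, Complex.norm_real, norm_eq_abs, norm_eq_abs] at h

theorem ring_choose_two (c : ℝ) : Ring.choose c 2 = c * (c - 1) / 2 := by
  rw [Ring.choose_eq_smul]
  simp only [Nat.factorial_two, Nat.cast_ofNat, descPochhammer_succ_right, descPochhammer_zero,
    CharP.cast_eq_zero, sub_zero, one_mul, Nat.cast_one, Polynomial.smeval_mul,
    Polynomial.smeval_X, pow_one, Polynomial.smeval_sub, Polynomial.smeval_one, pow_zero, one_smul,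
    smul_eq_mul]
  ring

theorem one_sub_rpow_sub_quadratic_isBigO (c : ℝ) :
    (fun s : ℝ ↦ (1 - s) ^ c - (1 - c * s + c * (c - 1) / 2 * s ^ 2)) =O[𝓝 0] fun s ↦ s ^ 3 := by
  have hneg : Tendsto (fun s : ℝ ↦ -s) (𝓝 0) (𝓝 0) := by
    simpa using continuous_neg.tendsto (0 : ℝ)
  have h := (one_add_rpow_hasFPowerSeriesAt_zero (a := c)).isBigO_sub_partialSum_pow 3
    |>.comp_tendsto hneg
  refine (h.congr_left fun s ↦ ?_).trans (isBigO_of_le _ fun s ↦ by simp)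
  have hsum : (binomialSeries ℝ c).partialSum 3 (-s) = 1 - c * s + c * (c - 1) / 2 * s ^ 2 := by
    simp only [FormalMultilinearSeries.partialSum, binomialSeries,
      FormalMultilinearSeries.apply_eq_prod_smul_coeff, Finset.prod_const, Finset.card_univ,
      Fintype.card_fin, FormalMultilinearSeries.coeff_ofScalars, smul_eq_mul,
      Finset.sum_range_succ, Finset.range_one, Finset.sum_singleton, pow_zero,
      Ring.choose_zero_right', mul_one, pow_one, Ring.choose_one_right', neg_mul, even_two,
      Even.neg_pow, ring_choose_two]
    ring
  simp [hsum, ← sub_eq_add_neg]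

/-- The second-order Taylor polynomial in `s`, at `s = 0`, of `exp (-T * (1 - a * s - d * s ^ 2))`,
hence of `exp (-T * f s)` for every phase `f s = 1 - a * s - d * s ^ 2 + O(s ^ 3)`. -/
noncomputable def expPhaseTaylor (a d T s : ℝ) : ℝ :=
  exp (-T) * (1 + a * T * s + (a ^ 2 * T ^ 2 / 2 + d * T) * s ^ 2)

theorem exp_phase_sub_expPhaseTaylor (a d T s u : ℝ) :
    exp (-T * (1 - u)) - expPhaseTaylor a d T s =
      exp (-T) * (exp (T * u) - (1 + T * u + (T * u) ^ 2 / 2))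
        + T * exp (-T) * (u - (a * s + d * s ^ 2))
        + T ^ 2 * exp (-T) / 2 * ((u - a * s) * (u + a * s)) := by
  have hexp : exp (-T * (1 - u)) = exp (-T) * exp (T * u) := by rw [← exp_add]; ring_nf
  rw [hexp, expPhaseTaylor]
  ring

theorem abs_sub_linear_le {a d K s u : ℝ} (hK : 0 ≤ K) (hs : 0 ≤ s) (hs1 : s ≤ 1)
    (hu : |u - (a * s + d * s ^ 2)| ≤ K * s ^ 3) : |u - a * s| ≤ (|d| + K) * s ^ 2 := by
  have hs32 : s ^ 3 ≤ s ^ 2 := pow_le_pow_of_le_one hs hs1 (by norm_num)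
  calc |u - a * s| = |(u - (a * s + d * s ^ 2)) + d * s ^ 2| := by ring_nf
    _ ≤ K * s ^ 3 + |d| * s ^ 2 := by
      refine (abs_add_le _ _).trans (add_le_add hu ?_)
      rw [abs_mul, abs_of_nonneg (sq_nonneg s)]
    _ ≤ (|d| + K) * s ^ 2 := by linarith [mul_le_mul_of_nonneg_left hs32 hK]

theorem abs_le_of_abs_sub_linear_le {a M s u : ℝ} (hM : 0 ≤ M) (hs : 0 ≤ s) (hs1 : s ≤ 1)
    (hu : |u - a * s| ≤ M * s ^ 2) : |u| ≤ (|a| + M) * s := by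
  have hs21 : s ^ 2 ≤ s := pow_le_of_le_one hs hs1 two_ne_zero
  calc |u| = |(u - a * s) + a * s| := by ring_nf
    _ ≤ M * s ^ 2 + |a| * s := by
      refine (abs_add_le _ _).trans (add_le_add hu ?_)
      rw [abs_mul, abs_of_nonneg hs]
    _ ≤ (|a| + M) * s := by linarith [mul_le_mul_of_nonneg_left hs21 hM]

theorem abs_exp_neg_mul_exp_sub_quadratic_le {T u w : ℝ} (hT : 0 ≤ T) (hu : |u| ≤ 1 / 2)
    (huw : |u| ≤ w) :
    |exp (-T) * (exp (T * u) - (1 + T * u + (T * u) ^ 2 / 2))| ≤ 384 * w ^ 3 * exp (-T / 4) := by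
  have hw : 0 ≤ w := (abs_nonneg u).trans huw
  have hexp : exp (-T) * exp |T * u| ≤ exp (-T / 2) := by
    rw [← exp_add, abs_mul, abs_of_nonneg hT]
    exact exp_le_exp.2 (by linarith [mul_le_mul_of_nonneg_left hu hT])
  have hT3 : T ^ 3 * exp (-T / 2) ≤ 384 * exp (-T / 4) := by
    simpa [Nat.factorial, show (6 * 4 ^ 3 : ℝ) = 384 by norm_num] using
      pow_mul_exp_neg_half_le 3 hT
  rw [abs_mul, abs_exp]
  calc exp (-T) * |exp (T * u) - (1 + T * u + (T * u) ^ 2 / 2)|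
      ≤ exp (-T) * (|T * u| ^ 3 * exp |T * u|) := by
        gcongr
        exact abs_exp_sub_quadratic_le _
    _ = |u| ^ 3 * (T ^ 3 * (exp (-T) * exp |T * u|)) := by
        rw [abs_mul, abs_of_nonneg hT]
        ring
    _ ≤ w ^ 3 * (T ^ 3 * exp (-T / 2)) := by gcongr
    _ ≤ w ^ 3 * (384 * exp (-T / 4)) := by gcongr
    _ = 384 * w ^ 3 * exp (-T / 4) := by ring

theorem exists_abs_exp_phase_sub_expPhaseTaylor_le (a d : ℝ) {K : ℝ} (hK : 0 ≤ K) :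
    ∃ C ≥ 0, ∀ T s u : ℝ, 0 ≤ T → 0 ≤ s → s ≤ 1 → |u| ≤ 1 / 2 →
      |u - (a * s + d * s ^ 2)| ≤ K * s ^ 3 →
      |exp (-T * (1 - u)) - expPhaseTaylor a d T s| ≤ C * s ^ 3 * exp (-T / 4) := by
  set M := |d| + K
  set L := |a| + M
  refine ⟨384 * L ^ 3 + 4 * K + 16 * (M * (L + |a|)), by positivity,
    fun T s u hT hs hs1 hu hrem ↦ ?_⟩
  have hlin : |u - a * s| ≤ M * s ^ 2 := abs_sub_linear_le hK hs hs1 hrem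
  have habs : |u| ≤ L * s := abs_le_of_abs_sub_linear_le (by positivity) hs hs1 hlin
  have hadd : |u + a * s| ≤ (L + |a|) * s := by
    refine (abs_add_le _ _).trans ?_
    rw [abs_mul, abs_of_nonneg hs, add_mul]
    gcongr
  have hT1 : T * exp (-T) ≤ 4 * exp (-T / 4) := by simpa using pow_mul_exp_neg_le 1 hT
  have hT2 : T ^ 2 * exp (-T) ≤ 32 * exp (-T / 4) := by
    simpa [show (2 * 4 ^ 2 : ℝ) = 32 by norm_num] using pow_mul_exp_neg_le 2 hT
  have hcubic := abs_exp_neg_mul_exp_sub_quadratic_le hT hu habs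
  have hlinear : |T * exp (-T) * (u - (a * s + d * s ^ 2))|
      ≤ 4 * exp (-T / 4) * (K * s ^ 3) := by
    rw [abs_mul, abs_of_nonneg (by positivity)]
    gcongr
  have hquadratic : |T ^ 2 * exp (-T) / 2 * ((u - a * s) * (u + a * s))|
      ≤ 32 * exp (-T / 4) / 2 * (M * s ^ 2 * ((L + |a|) * s)) := by
    rw [abs_mul, abs_mul (u - a * s), abs_of_nonneg (by positivity)]
    gcongr
  rw [exp_phase_sub_expPhaseTaylor]
  refine (abs_add_three _ _ _).trans ?_
  calc _ ≤ _ := add_le_add (add_le_add hcubic hlinear) hquadratic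
    _ = _ := by ring

theorem exists_abs_exp_neg_mul_sub_expPhaseTaylor_le {f : ℝ → ℝ} {a d : ℝ}
    (hf : (fun s ↦ f s - (1 - a * s - d * s ^ 2)) =O[𝓝 0] fun s ↦ s ^ 3) :
    ∃ C ≥ 0, ∃ σ ∈ Ioc (0 : ℝ) (1 / 2), ∀ T s : ℝ, 0 ≤ T → s ∈ Icc 0 σ →
      |exp (-T * f s) - expPhaseTaylor a d T s| ≤ C * s ^ 3 * exp (-T / 4) := by
  obtain ⟨K, hK, hbound⟩ := hf.exists_pos
  have hlim : Tendsto (fun s ↦ 1 - f s) (𝓝 0) (𝓝 0) := by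
    have hcube : Tendsto (fun s : ℝ ↦ s ^ 3) (𝓝 0) (𝓝 0) := by
      simpa using (continuous_pow 3).tendsto (0 : ℝ)
    have hpoly : Tendsto (fun s : ℝ ↦ a * s + d * s ^ 2) (𝓝 0) (𝓝 0) := by
      have : Continuous fun s : ℝ ↦ a * s + d * s ^ 2 := by fun_prop
      simpa using this.tendsto 0
    simpa using (hpoly.sub (hf.trans_tendsto hcube)).congr fun s ↦ by ring
  have hsmall : ∀ᶠ s in 𝓝 0, |1 - f s| < 1 / 2 := by
    have habs : Tendsto (fun s ↦ |1 - f s|) (𝓝 0) (𝓝 0) := by simpa using hlim.abs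
    exact habs.eventually_lt_const (by norm_num)
  obtain ⟨ε, hε, hball⟩ := Metric.eventually_nhds_iff.1 (hbound.bound.and hsmall)
  obtain ⟨C, hC0, hC⟩ := exists_abs_exp_phase_sub_expPhaseTaylor_le a d hK.le
  refine ⟨C, hC0, min (ε / 2) (1 / 2), ⟨by positivity, min_le_right _ _⟩, fun T s hT hs ↦ ?_⟩
  have hs1 : s ≤ 1 := hs.2.trans ((min_le_right _ _).trans (by norm_num))
  have hsε : dist s 0 < ε := by
    rw [dist_zero_right, norm_eq_abs, abs_of_nonneg hs.1]
    linarith [hs.2.trans (min_le_left _ _)]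
  obtain ⟨hrem, hhalf⟩ := hball hsε
  have hu : |1 - f s - (a * s + d * s ^ 2)| ≤ K * s ^ 3 := by
    rw [norm_eq_abs, norm_eq_abs, abs_of_nonneg (pow_nonneg hs.1 3), abs_sub_comm] at hrem
    convert hrem using 2
    ring
  simpa using hC T s (1 - f s) hT hs.1 hs1 hhalf.le hu

theorem pow_le_inv_pow_mul_pow_add {σ s : ℝ} (hσ : 0 < σ) (hσs : σ ≤ s) (j k : ℕ) :
    s ^ j ≤ (σ ^ k)⁻¹ * s ^ (j + k) := by
  have hs : 0 < s := hσ.trans_le hσs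
  rw [inv_mul_eq_div, le_div_iff₀ (by positivity), pow_add]
  gcongr

theorem exists_abs_expPhaseTaylor_le (a d : ℝ) {σ : ℝ} (hσ : 0 < σ) :
    ∃ C ≥ 0, ∀ T s : ℝ, 0 ≤ T → σ ≤ s → |expPhaseTaylor a d T s| ≤ C * s ^ 3 * exp (-T / 4) := by
  refine ⟨(σ ^ 3)⁻¹ + 4 * |a| * (σ ^ 2)⁻¹ + (16 * a ^ 2 + 4 * |d|) * σ⁻¹, by positivity,
    fun T s hT hσs ↦ ?_⟩
  have hs : 0 < s := hσ.trans_le hσs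
  have hs0 : 1 ≤ (σ ^ 3)⁻¹ * s ^ 3 := by simpa using pow_le_inv_pow_mul_pow_add hσ hσs 0 3
  have hs1 : s ≤ (σ ^ 2)⁻¹ * s ^ 3 := by simpa using pow_le_inv_pow_mul_pow_add hσ hσs 1 2
  have hs2 : s ^ 2 ≤ σ⁻¹ * s ^ 3 := by simpa using pow_le_inv_pow_mul_pow_add hσ hσs 2 1
  have hT0 : exp (-T) ≤ exp (-T / 4) := by simpa using pow_mul_exp_neg_le 0 hT
  have hT1 : T * exp (-T) ≤ 4 * exp (-T / 4) := by simpa using pow_mul_exp_neg_le 1 hT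
  have hT2 : T ^ 2 * exp (-T) ≤ 32 * exp (-T / 4) := by
    simpa [show (2 * 4 ^ 2 : ℝ) = 32 by norm_num] using pow_mul_exp_neg_le 2 hT
  calc |expPhaseTaylor a d T s|
      = |exp (-T) * 1 + a * (T * exp (-T) * s)
          + (a ^ 2 / 2 * (T ^ 2 * exp (-T)) + d * (T * exp (-T))) * s ^ 2| := by
        rw [expPhaseTaylor]; ring_nf
    _ ≤ exp (-T) * 1 + |a| * (T * exp (-T) * s)
          + (a ^ 2 / 2 * (T ^ 2 * exp (-T)) + |d| * (T * exp (-T))) * s ^ 2 := by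
        refine (abs_add_three _ _ _).trans ?_
        rw [abs_mul a, abs_mul _ (s ^ 2)]
        refine add_le_add (add_le_add ?_ ?_)
          (mul_le_mul ((abs_add_le _ _).trans ?_) ?_ (by positivity) (by positivity))
        all_goals simp only [abs_mul, abs_div, abs_pow, abs_exp, abs_of_nonneg hT, abs_of_pos hs,
          abs_one, sq_abs, abs_two, le_refl]
    _ ≤ exp (-T / 4) * ((σ ^ 3)⁻¹ * s ^ 3) + |a| * (4 * exp (-T / 4) * ((σ ^ 2)⁻¹ * s ^ 3))
          + (a ^ 2 / 2 * (32 * exp (-T / 4)) + |d| * (4 * exp (-T / 4))) * (σ⁻¹ * s ^ 3) := by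
        gcongr
    _ = _ := by ring

theorem pow_mul_expPhaseTaylor_eq (n : ℕ) (a d : ℝ) (l m g : ℝ) :
    g ^ n * expPhaseTaylor a d (l * g) (g / m) =
      g ^ n * exp (-(l * g)) + a * l / m * (g ^ (n + 2) * exp (-(l * g)))
        + a ^ 2 * l ^ 2 / (2 * m ^ 2) * (g ^ (n + 4) * exp (-(l * g)))
        + d * l / m ^ 2 * (g ^ (n + 3) * exp (-(l * g))) := by
  rw [expPhaseTaylor]
  ring

theorem integrableOn_pow_mul_expPhaseTaylor (n : ℕ) (a d : ℝ) {l : ℝ} (m : ℝ) (hl : 0 < l) :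
    IntegrableOn (fun g ↦ g ^ n * expPhaseTaylor a d (l * g) (g / m)) (Ioi 0) := by
  simp only [pow_mul_expPhaseTaylor_eq]
  have hint := fun k ↦ integrableOn_pow_mul_exp_neg_mul_Ioi_s17 k hl
  exact (((hint n).add ((hint _).const_mul _)).add ((hint _).const_mul _)).add
    ((hint _).const_mul _)

theorem integral_pow_mul_expPhaseTaylor (n : ℕ) (a d : ℝ) {l : ℝ} (m : ℝ) (hl : 0 < l) :
    ∫ g in Ioi 0, g ^ n * expPhaseTaylor a d (l * g) (g / m) =
      n ! / l ^ (n + 1) + a * (n + 2)! / (l ^ (n + 2) * m)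
        + (a ^ 2 * (n + 4)! / 2 + d * (n + 3)!) / (l ^ (n + 3) * m ^ 2) := by
  simp only [pow_mul_expPhaseTaylor_eq]
  have hint := fun k ↦ integrableOn_pow_mul_exp_neg_mul_Ioi_s17 k hl
  have hint₂ := (hint n).add ((hint (n + 2)).const_mul (a * l / m))
  have hint₄ := hint₂.add ((hint (n + 4)).const_mul (a ^ 2 * l ^ 2 / (2 * m ^ 2)))
  rw [integral_add (by exact hint₄) ((hint _).const_mul _),
    integral_add (by exact hint₂) ((hint _).const_mul _),
    integral_add (hint n) ((hint _).const_mul _)]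
  simp only [integral_const_mul, integral_pow_mul_exp_neg_mul_Ioi_s17 _ hl]
  field_simp
  ring

/-- The integrand of the unnormalized conditional `n`-th moment of the goal, with tail exponent
`c = b - 1`. -/
noncomputable def momentIntegrand (n : ℕ) (c η m g : ℝ) : ℝ :=
  g ^ n * exp (-g * ((m - g) / η) ^ c)

/-- The second-order expansion of `momentIntegrand n c η m g` in `g / m`, at fixed
`(m / η) ^ c * g`. -/
noncomputable def momentTaylor (n : ℕ) (c η m g : ℝ) : ℝ :=
  g ^ n * expPhaseTaylor c (-(c * (c - 1) / 2)) ((m / η) ^ c * g) (g / m)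

theorem momentIntegrand_eq (n : ℕ) (c : ℝ) {η m g : ℝ} (hη : 0 < η) (hm : 0 < m) (hgm : g ≤ m) :
    momentIntegrand n c η m g = g ^ n * exp (-((m / η) ^ c * g) * (1 - g / m) ^ c) := by
  have hfactor : (m - g) / η = m / η * (1 - g / m) := by field_simp
  rw [momentIntegrand, hfactor, mul_rpow (by positivity) (sub_nonneg.2 ((div_le_one hm).2 hgm))]
  ring_nf

-- Which of the two exponentials dominates depends on the sign of `c`.
theorem exp_neg_mul_rpow_le_add (c : ℝ) {x y g : ℝ} (hx : 1 ≤ x) (hxy : x ≤ y) (hg : 0 ≤ g) :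
    exp (-g * x ^ c) ≤ exp (-(y ^ c * g)) + exp (-g) := by
  rcases le_total 0 c with hc | hc
  · have hpow : 1 ≤ x ^ c := one_le_rpow hx hc
    have : exp (-g * x ^ c) ≤ exp (-g) := exp_le_exp.2 (by nlinarith)
    linarith [exp_pos (-(y ^ c * g))]
  · have hpow : y ^ c ≤ x ^ c := rpow_le_rpow_of_nonpos (by linarith) hxy hc
    have : exp (-g * x ^ c) ≤ exp (-(y ^ c * g)) := exp_le_exp.2 (by nlinarith)
    linarith [exp_pos (-g)]

theorem exists_abs_momentIntegrand_sub_momentTaylor_le (c : ℝ) :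
    ∃ C ≥ 0, ∃ σ ∈ Ioc (0 : ℝ) (1 / 2), ∀ (n : ℕ) (η m g : ℝ), 0 < η → 0 < m → 0 ≤ g →
      g / m ≤ σ → |momentIntegrand n c η m g - momentTaylor n c η m g| ≤
        C * (g ^ n * (g / m) ^ 3 * exp (-((m / η) ^ c * g) / 4)) := by
  obtain ⟨C, hC0, σ, hσ, hC⟩ := exists_abs_exp_neg_mul_sub_expPhaseTaylor_le
    (f := fun s ↦ (1 - s) ^ c) (a := c) (d := -(c * (c - 1) / 2))
    ((one_sub_rpow_sub_quadratic_isBigO c).congr_left fun s ↦ by ring)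
  refine ⟨C, hC0, σ, hσ, fun n η m g hη hm hg hgσ ↦ ?_⟩
  have hgm : g ≤ m := (div_le_one hm).1 (hgσ.trans (hσ.2.trans (by norm_num)))
  rw [momentIntegrand_eq n c hη hm hgm, momentTaylor, ← mul_sub, abs_mul,
    abs_of_nonneg (pow_nonneg hg n)]
  calc _ ≤ g ^ n * (C * (g / m) ^ 3 * exp (-((m / η) ^ c * g) / 4)) := by
        gcongr
        exact hC _ _ (by positivity) ⟨by positivity, hgσ⟩
    _ = _ := by ring

theorem exists_abs_momentTaylor_le (c : ℝ) {σ : ℝ} (hσ : 0 < σ) :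
    ∃ C ≥ 0, ∀ (n : ℕ) (η m g : ℝ), 0 < η → 0 < m → 0 ≤ g → σ ≤ g / m →
      |momentTaylor n c η m g| ≤
        C * (g ^ n * (g / m) ^ 3 * exp (-((m / η) ^ c * g) / 4)) := by
  obtain ⟨C, hC0, hC⟩ := exists_abs_expPhaseTaylor_le c (-(c * (c - 1) / 2)) hσ
  refine ⟨C, hC0, fun n η m g hη hm hg hσg ↦ ?_⟩
  rw [momentTaylor, abs_mul, abs_of_nonneg (pow_nonneg hg n)]
  calc _ ≤ g ^ n * (C * (g / m) ^ 3 * exp (-((m / η) ^ c * g) / 4)) := by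
        gcongr
        exact hC _ _ (by positivity) hσg
    _ = _ := by ring

theorem momentIntegrand_le_of_le_div (n N : ℕ) (c : ℝ) {η m g σ : ℝ} (hη : 0 < η) (hσ : 0 < σ)
    (hg : 0 ≤ g) (hσg : σ ≤ g / m) (hgm : g ≤ m - η) :
    momentIntegrand n c η m g ≤
      (σ ^ 3)⁻¹ * (g ^ n * (g / m) ^ 3 * exp (-((m / η) ^ c * g) / 4))
        + (σ ^ N)⁻¹ * (g ^ n * (g / m) ^ N * exp (-g)) := by
  have hm : 0 < m := by linarith
  have hone (k : ℕ) : 1 ≤ (σ ^ k)⁻¹ * (g / m) ^ k := by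
    simpa using pow_le_inv_pow_mul_pow_add hσ hσg 0 k
  have hquarter : exp (-((m / η) ^ c * g)) ≤ exp (-((m / η) ^ c * g) / 4) := by
    have : 0 ≤ (m / η) ^ c * g := by positivity
    exact exp_le_exp.2 (by linarith)
  calc momentIntegrand n c η m g
      ≤ g ^ n * (exp (-((m / η) ^ c * g)) + exp (-g)) := by
        rw [momentIntegrand]
        gcongr
        exact exp_neg_mul_rpow_le_add c ((one_le_div hη).2 (by linarith)) (by gcongr; linarith) hg
    _ ≤ g ^ n * ((σ ^ 3)⁻¹ * (g / m) ^ 3 * exp (-((m / η) ^ c * g) / 4)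
          + (σ ^ N)⁻¹ * (g / m) ^ N * exp (-g)) := by
        gcongr
        · exact hquarter.trans (le_mul_of_one_le_left (exp_pos _).le (hone 3))
        · exact le_mul_of_one_le_left (exp_pos _).le (hone N)
    _ = _ := by ring

theorem exists_abs_indicator_momentIntegrand_sub_momentTaylor_le (n N : ℕ) (c : ℝ) :
    ∃ C, ∀ η m g : ℝ, 0 < η → 2 * η ≤ m → 0 < g →
      |(Ioc 0 (m - η)).indicator (momentIntegrand n c η m) g - momentTaylor n c η m g| ≤
        C * (g ^ n * (g / m) ^ 3 * exp (-((m / η) ^ c * g) / 4)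
          + g ^ n * (g / m) ^ N * exp (-g)) := by
  obtain ⟨C₁, hC₁, σ, ⟨hσ, hσ2⟩, hnear⟩ := exists_abs_momentIntegrand_sub_momentTaylor_le c
  obtain ⟨C₂, hC₂, hfar⟩ := exists_abs_momentTaylor_le c hσ
  refine ⟨C₁ + C₂ + (σ ^ 3)⁻¹ + (σ ^ N)⁻¹, fun η m g hη hηm hg ↦ ?_⟩
  have hm : 0 < m := by linarith
  replace hnear := hnear n η m g hη hm hg.le
  replace hfar := hfar n η m g hη hm hg.le
  have htail := momentIntegrand_le_of_le_div n N c hη hσ hg.le (m := m)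
  set E₁ := g ^ n * (g / m) ^ 3 * exp (-((m / η) ^ c * g) / 4)
  set E₂ := g ^ n * (g / m) ^ N * exp (-g)
  suffices |(Ioc 0 (m - η)).indicator (momentIntegrand n c η m) g - momentTaylor n c η m g| ≤
      (C₁ + C₂ + (σ ^ 3)⁻¹) * E₁ + (σ ^ N)⁻¹ * E₂ by
    have h₁ : 0 ≤ (σ ^ N)⁻¹ * E₁ := by positivity
    have h₂ : 0 ≤ (C₁ + C₂ + (σ ^ 3)⁻¹) * E₂ := by positivity
    linarith
  have hC₁E : 0 ≤ C₁ * E₁ := by positivity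
  have hC₂E : 0 ≤ C₂ * E₁ := by positivity
  have hσE₁ : 0 ≤ (σ ^ 3)⁻¹ * E₁ := by positivity
  have hσE₂ : 0 ≤ (σ ^ N)⁻¹ * E₂ := by positivity
  rcases le_or_gt g (m - η) with hgm | hgm
  · rw [indicator_of_mem (mem_Ioc.2 ⟨hg, hgm⟩)]
    rcases le_total (g / m) σ with hgσ | hσg
    · linarith [hnear hgσ]
    · have hnonneg : 0 ≤ momentIntegrand n c η m g := by unfold momentIntegrand; positivity
      refine (abs_sub _ _).trans ?_
      rw [abs_of_nonneg hnonneg]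
      linarith [htail hσg hgm, hfar hσg]
  · have hσg : σ ≤ g / m := hσ2.trans ((le_div_iff₀ hm).2 (by linarith))
    rw [indicator_of_notMem fun h ↦ hgm.not_ge h.2, zero_sub, abs_neg]
    linarith [hfar hσg]

theorem integrableOn_momentIntegrand (n : ℕ) (c m : ℝ) {η : ℝ} (hη : 0 < η) :
    IntegrableOn (momentIntegrand n c η m) (Ioc 0 (m - η)) := by
  have hcont : ContinuousOn (momentIntegrand n c η m) (Icc 0 (m - η)) := by
    have hrpow : ContinuousOn (fun g ↦ ((m - g) / η) ^ c) (Icc 0 (m - η)) :=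
      ContinuousOn.rpow_const (by fun_prop) fun g hg ↦
        .inl (div_pos (by linarith [hg.2]) hη).ne'
    unfold momentIntegrand
    fun_prop
  exact hcont.integrableOn_Icc.mono_set Ioc_subset_Icc_self

theorem pow_mul_div_pow_mul_exp_eq (n k : ℕ) (m r g : ℝ) :
    g ^ n * (g / m) ^ k * exp (-(r * g)) = (m ^ k)⁻¹ * (g ^ (n + k) * exp (-(r * g))) := by
  ring

theorem integrableOn_pow_mul_div_pow_mul_exp (n k : ℕ) (m : ℝ) {r : ℝ} (hr : 0 < r) :
    IntegrableOn (fun g ↦ g ^ n * (g / m) ^ k * exp (-(r * g))) (Ioi 0) := by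
  simp only [pow_mul_div_pow_mul_exp_eq]
  exact (integrableOn_pow_mul_exp_neg_mul_Ioi_s17 (n + k) hr).const_mul _

theorem integral_pow_mul_div_pow_mul_exp (n k : ℕ) (m : ℝ) {r : ℝ} (hr : 0 < r) :
    ∫ g in Ioi 0, g ^ n * (g / m) ^ k * exp (-(r * g)) = (n + k)! / (r ^ (n + k + 1) * m ^ k) := by
  simp only [pow_mul_div_pow_mul_exp_eq, integral_const_mul, integral_pow_mul_exp_neg_mul_Ioi_s17 _ hr]
  ring

theorem exists_abs_integral_momentIntegrand_sub_integral_momentTaylor_le (n N : ℕ) (c : ℝ) :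
    ∃ C, ∀ η m : ℝ, 0 < η → 2 * η ≤ m →
      |(∫ g in Ioc 0 (m - η), momentIntegrand n c η m g) - ∫ g in Ioi 0, momentTaylor n c η m g| ≤
        C * ((n + 3)! / (((m / η) ^ c / 4) ^ (n + 4) * m ^ 3) + (n + N)! / m ^ N) := by
  obtain ⟨C, hC⟩ := exists_abs_indicator_momentIntegrand_sub_momentTaylor_le n N c
  refine ⟨C, fun η m hη hηm ↦ ?_⟩
  have hm : 0 < m := by linarith
  have hl : 0 < (m / η) ^ c := by positivity
  have hindicator : IntegrableOn ((Ioc 0 (m - η)).indicator (momentIntegrand n c η m)) (Ioi 0) :=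
    ((integrable_indicator_iff measurableSet_Ioc).2
      (integrableOn_momentIntegrand n c m hη)).integrableOn
  have htaylor : IntegrableOn (momentTaylor n c η m) (Ioi 0) :=
    integrableOn_pow_mul_expPhaseTaylor n _ _ m hl
  have hbound₁ := integrableOn_pow_mul_div_pow_mul_exp n 3 m (r := (m / η) ^ c / 4) (by positivity)
  have hbound₂ := integrableOn_pow_mul_div_pow_mul_exp n N m one_pos
  have hsplit : ∫ g in Ioc 0 (m - η), momentIntegrand n c η m g =
      ∫ g in Ioi 0, (Ioc 0 (m - η)).indicator (momentIntegrand n c η m) g := by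
    rw [setIntegral_indicator measurableSet_Ioc, inter_eq_right.2 Ioc_subset_Ioi_self]
  rw [hsplit, ← integral_sub hindicator htaylor, ← norm_eq_abs]
  calc _ ≤ ∫ g in Ioi 0, C * (g ^ n * (g / m) ^ 3 * exp (-((m / η) ^ c / 4 * g))
            + g ^ n * (g / m) ^ N * exp (-(1 * g))) := by
        refine norm_integral_le_of_norm_le ((hbound₁.add hbound₂).const_mul C)
          ((ae_restrict_iff' measurableSet_Ioi).2 (.of_forall fun g hg ↦ ?_))
        exact (hC η m g hη hηm hg).trans_eq (by ring_nf)
    _ = _ := by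
        rw [integral_const_mul, integral_add hbound₁ hbound₂,
          integral_pow_mul_div_pow_mul_exp n 3 m (by positivity),
          integral_pow_mul_div_pow_mul_exp n N m one_pos, one_pow, one_mul]

theorem rpow_eq_rpow_pow_mul_pow {x : ℝ} (hx : 0 < x) {c r : ℝ} (j k : ℕ) (hr : r = c * j + k) :
    x ^ r = (x ^ c) ^ j * x ^ k := by
  rw [hr, rpow_add hx, rpow_mul_natCast hx.le, rpow_natCast]

theorem integral_momentIntegrand_sub_integral_momentTaylor_isBigO (n : ℕ) (c : ℝ) {η : ℝ}
    (hη : 0 < η) :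
    (fun m ↦ (∫ g in Ioc 0 (m - η), momentIntegrand n c η m g) -
        ∫ g in Ioi 0, momentTaylor n c η m g)
      =O[atTop] fun m ↦ m ^ (-(c * (n + 4) + 3)) := by
  obtain ⟨N, hN⟩ := exists_nat_gt (c * (n + 4) + 3)
  obtain ⟨C, hC⟩ := exists_abs_integral_momentIntegrand_sub_integral_momentTaylor_le n N c
  have hmain : (fun m : ℝ ↦ (n + 3)! / (((m / η) ^ c / 4) ^ (n + 4) * m ^ 3))
      =O[atTop] fun m ↦ m ^ (-(c * (n + 4) + 3)) := by
    refine (isBigO_const_mul_self ((n + 3)! * (4 * η ^ c) ^ (n + 4)) _ _).congr' ?_ .rfl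
    filter_upwards [eventually_gt_atTop 0] with m hm
    rw [rpow_neg hm.le, rpow_eq_rpow_pow_mul_pow hm (n + 4) 3 (by push_cast; rfl),
      div_rpow hm.le hη.le, div_div, mul_comm (η ^ c), div_pow]
    field_simp
  have htail : (fun m : ℝ ↦ ((n + N)! : ℝ) / m ^ N)
      =O[atTop] fun m ↦ m ^ (-(c * (n + 4) + 3)) := by
    refine (((isLittleO_rpow_rpow_atTop (neg_lt_neg hN)).isBigO).const_mul_left
      ((n + N)! : ℝ)).congr' ?_ .rfl
    filter_upwards [eventually_ge_atTop 0] with m hm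
    rw [rpow_neg hm, rpow_natCast, div_eq_mul_inv]
  refine IsBigO.trans (.of_bound' ?_) ((hmain.add htail).const_mul_left C)
  filter_upwards [eventually_ge_atTop (2 * η)] with m hm
  exact (hC η m hη hm).trans (le_abs_self _)

theorem integral_momentIntegrand_isBigO (n : ℕ) (c : ℝ) {η : ℝ} (hη : 0 < η) :
    (fun m ↦ (∫ g in Ioc 0 (m - η), momentIntegrand n c η m g) -
        (n ! / ((m / η) ^ c) ^ (n + 1) + c * (n + 2)! / (((m / η) ^ c) ^ (n + 2) * m)
          + (c ^ 2 * (n + 4)! / 2 - c * (c - 1) / 2 * (n + 3)!)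
            / (((m / η) ^ c) ^ (n + 3) * m ^ 2)))
      =O[atTop] fun m ↦ m ^ (-(c * (n + 4) + 3)) := by
  refine (integral_momentIntegrand_sub_integral_momentTaylor_isBigO n c hη).congr' ?_ .rfl
  filter_upwards [eventually_gt_atTop 0] with m hm
  simp only [momentTaylor]
  rw [integral_pow_mul_expPhaseTaylor n _ _ m (by positivity)]
  ring

theorem integral_g_exp_expansion_general (η b : ℝ) (hη : 0 < η) :
    (fun m : ℝ =>
        (∫ g in Set.Ioc (0 : ℝ) (m - η), g * Real.exp (-g * ((m - g) / η) ^ (b - 1))) -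
          (η ^ (2 * b - 2) / m ^ (2 * b - 2)
            + 6 * (b - 1) * η ^ (3 * b - 3) / m ^ (3 * b - 2)
            + 12 * (b - 1) * (4 * b - 3) * η ^ (4 * b - 4) / m ^ (4 * b - 2)))
      =O[atTop] (fun m : ℝ => m ^ (-(5 * b - 2))) := by
  have h := integral_momentIntegrand_isBigO 1 (b - 1) hη
  refine h.congr' ?_ (.of_forall fun m ↦ by push_cast; ring_nf)
  filter_upwards [eventually_gt_atTop 0] with m hm
  have hη2 := rpow_eq_rpow_pow_mul_pow hη (r := 2 * b - 2) (c := b - 1) 2 0 (by push_cast; ring)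
  have hη3 := rpow_eq_rpow_pow_mul_pow hη (r := 3 * b - 3) (c := b - 1) 3 0 (by push_cast; ring)
  have hη4 := rpow_eq_rpow_pow_mul_pow hη (r := 4 * b - 4) (c := b - 1) 4 0 (by push_cast; ring)
  have hm2 := rpow_eq_rpow_pow_mul_pow hm (r := 2 * b - 2) (c := b - 1) 2 0 (by push_cast; ring)
  have hm3 := rpow_eq_rpow_pow_mul_pow hm (r := 3 * b - 2) (c := b - 1) 3 1 (by push_cast; ring)
  have hm4 := rpow_eq_rpow_pow_mul_pow hm (r := 4 * b - 2) (c := b - 1) 4 2 (by push_cast; ring)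
  simp only [momentIntegrand, pow_one, hη2, hη3, hη4, hm2, hm3, hm4, div_rpow hm.le hη.le]
  simp only [Nat.factorial]
  push_cast
  field_simp
  ring

/-- Asymptotic expansion, for `η > 0` and `b > 1`, of
`∫_0^{m-η} g·exp(-g((m-g)/η)^{b-1}) dg` as `m → ∞`. -/
theorem integral_g_exp_expansion (η b : ℝ) (hη : 0 < η) (hb : 1 < b) :
    (fun m : ℝ =>
        (∫ g in Set.Ioc (0 : ℝ) (m - η), g * Real.exp (-g * ((m - g) / η) ^ (b - 1))) -
          (η ^ (2 * b - 2) / m ^ (2 * b - 2)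
            + 6 * (b - 1) * η ^ (3 * b - 3) / m ^ (3 * b - 2)
            + 12 * (b - 1) * (4 * b - 3) * η ^ (4 * b - 4) / m ^ (4 * b - 2)))
      =o[atTop] (fun m : ℝ => m ^ (-(4 * b - 2))) :=
  (integral_g_exp_expansion_general η b hη).trans_isLittleO
    (isLittleO_rpow_rpow_atTop (by linarith))
end

section
/- Let G ~ Exp(1), and given G = g let ξ have conditional density f(x) = g·exp(-g((x/η)^{b-1}-1))·(x^{b-2}/η^{b-1})·(b-1)·1[x>η], with η > 0, b > 2, and set M = G + ξ. Then E[G | M > m] ~ η^{b-1}/m^{b-1} → 0 and E[ξ | M > m] ~ m·(b-1)/(b-2) → ∞ as m → ∞. -/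
open MeasureTheory ProbabilityTheory Filter Asymptotics Real

/-- Expectation of `X` conditioned on an event `s` (i.e. `E[X·1ₛ]/P(s)`). -/
noncomputable def condExpEvent {Ω : Type*} [MeasureSpace Ω] (X : Ω → ℝ) (s : Set Ω) : ℝ :=
  (∫ ω in s, X ω) / (ℙ s).toReal

/-!
Disintegrated along `ξ` rather than `G`, the model has `ξ` Pareto with rate `α = b - 1` and `G`
gamma with shape `2` and rate `(x / η) ^ α` given `ξ = x`. Gamma and Pareto moments are explicit, so
`E[G ^ q * ξ ^ r; ξ > x]` is a constant times `x ^ (-(α * (q + 1) - r))`. Since `G` has moments of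
every order, adding it to `ξ` does not change such a power-law tail to leading order, so that
`{ξ > m}` may be replaced by `{G + ξ > m}`. The conditional expectations are quotients of these tail
moments, at `(q, r) = (1, 0)` and `(0, 1)` over `(0, 0)`.
-/

section TailOfSum

variable {Ω : Type*} [MeasurableSpace Ω] {μ : Measure Ω} {W X Y : Ω → ℝ} {s κ c t : ℝ}

lemma setIntegral_union_le {A B : Set Ω} (hW : 0 ≤ᵐ[μ] W) (hWint : Integrable W μ) :
    ∫ ω in A ∪ B, W ω ∂μ ≤ (∫ ω in A, W ω ∂μ) + ∫ ω in B, W ω ∂μ := by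
  rw [← integral_add_measure hWint.integrableOn hWint.integrableOn]
  refine integral_mono_measure (Measure.restrict_union_le A B) ?_
    (hWint.restrict.add_measure hWint.restrict)
  exact ae_add_measure_iff.2 ⟨ae_restrict_of_ae hW, ae_restrict_of_ae hW⟩

lemma setIntegral_le_rpow_neg_mul_integral (hW : 0 ≤ᵐ[μ] W) (hX : 0 ≤ᵐ[μ] X)
    (hXm : AEMeasurable X μ) (hWint : Integrable W μ)
    (hWX : Integrable (fun ω ↦ W ω * X ω ^ κ) μ) (hκ : 0 ≤ κ) (ht : 0 < t) :
    ∫ ω in {ω | t ≤ X ω}, W ω ∂μ ≤ t ^ (-κ) * ∫ ω, W ω * X ω ^ κ ∂μ := by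
  have hmem : ∀ᵐ ω ∂μ.restrict {ω | t ≤ X ω}, t ≤ X ω :=
    ae_restrict_mem₀ (nullMeasurableSet_le aemeasurable_const hXm)
  have hWX_nonneg : 0 ≤ᵐ[μ] fun ω ↦ t ^ (-κ) * (W ω * X ω ^ κ) := by
    filter_upwards [hW, hX] with ω hWω hXω
    simp only [Pi.zero_apply] at hWω hXω ⊢
    positivity
  rw [← integral_const_mul]
  refine le_trans ?_
    (setIntegral_le_integral (s := {ω | t ≤ X ω}) (hWX.const_mul _) hWX_nonneg)
  refine integral_mono_ae hWint.integrableOn (hWX.const_mul _).integrableOn ?_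
  filter_upwards [hmem, ae_restrict_of_ae hW] with ω htX hWω
  have hpow : 1 ≤ t ^ (-κ) * X ω ^ κ := by
    rw [rpow_neg ht.le, inv_mul_eq_div, one_le_div (by positivity)]
    exact rpow_le_rpow ht.le htX hκ
  calc W ω ≤ W ω * (t ^ (-κ) * X ω ^ κ) := le_mul_of_one_le_right hWω hpow
    _ = t ^ (-κ) * (W ω * X ω ^ κ) := by ring

lemma setIntegral_lt_add_le (hW : 0 ≤ᵐ[μ] W) (hX : 0 ≤ᵐ[μ] X) (hXm : AEMeasurable X μ)
    (hWint : Integrable W μ) (hWX : Integrable (fun ω ↦ W ω * X ω ^ κ) μ) (hκ : 0 ≤ κ)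
    (ht : 0 < t) (m : ℝ) :
    ∫ ω in {ω | m < X ω + Y ω}, W ω ∂μ ≤
      (∫ ω in {ω | m - t < Y ω}, W ω ∂μ) + t ^ (-κ) * ∫ ω, W ω * X ω ^ κ ∂μ := by
  have hsub : {ω | m < X ω + Y ω} ⊆ {ω | m - t < Y ω} ∪ {ω | t ≤ X ω} := by
    intro ω (hω : m < X ω + Y ω)
    rcases lt_or_ge (X ω) t with hlt | hge
    · exact Or.inl (show m - t < Y ω by linarith)
    · exact Or.inr hge
  calc ∫ ω in {ω | m < X ω + Y ω}, W ω ∂μ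
      ≤ ∫ ω in {ω | m - t < Y ω} ∪ {ω | t ≤ X ω}, W ω ∂μ :=
        setIntegral_mono_set hWint.integrableOn (ae_restrict_of_ae hW) hsub.eventuallyLE
    _ ≤ (∫ ω in {ω | m - t < Y ω}, W ω ∂μ) + ∫ ω in {ω | t ≤ X ω}, W ω ∂μ :=
        setIntegral_union_le hW hWint
    _ ≤ _ := by
        gcongr
        exact setIntegral_le_rpow_neg_mul_integral hW hX hXm hWint hWX hκ ht

lemma setIntegral_lt_le_setIntegral_lt_add (hW : 0 ≤ᵐ[μ] W) (hX : 0 ≤ᵐ[μ] X)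
    (hWint : Integrable W μ) (m : ℝ) :
    ∫ ω in {ω | m < Y ω}, W ω ∂μ ≤ ∫ ω in {ω | m < X ω + Y ω}, W ω ∂μ := by
  refine setIntegral_mono_set hWint.integrableOn (ae_restrict_of_ae hW) ?_
  filter_upwards [hX] with ω hXω (hω : m < Y ω)
  exact lt_add_of_nonneg_of_lt hXω hω

lemma isEquivalent_sub_rpow_id {θ : ℝ} (hθ : θ < 1) :
    (fun m : ℝ ↦ m - m ^ θ) ~[atTop] (fun m ↦ m) := by
  have h : (fun m : ℝ ↦ m ^ θ) =o[atTop] fun m ↦ m := by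
    refine isLittleO_of_tendsto' ((eventually_ne_atTop 0).mono fun m hm h ↦ absurd h hm) ?_
    refine (tendsto_rpow_neg_atTop (sub_pos.2 hθ)).congr' ?_
    filter_upwards [eventually_gt_atTop 0] with m hm
    rw [neg_sub, rpow_sub_one hm.ne']
  exact IsEquivalent.refl.sub_isLittleO h

theorem tendsto_rpow_mul_setIntegral_lt_add (hW : 0 ≤ᵐ[μ] W) (hX : 0 ≤ᵐ[μ] X)
    (hXm : AEMeasurable X μ) (hWint : Integrable W μ)
    (hWX : Integrable (fun ω ↦ W ω * X ω ^ κ) μ) (hκ : 0 < κ) (hsκ : s < κ)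
    (hY : Tendsto (fun x ↦ x ^ s * ∫ ω in {ω | x < Y ω}, W ω ∂μ) atTop (nhds c)) :
    Tendsto (fun m ↦ m ^ s * ∫ ω in {ω | m < X ω + Y ω}, W ω ∂μ) atTop (nhds c) := by
  -- The cut-off `m ^ θ` for `X` is negligible against `m`, yet large enough for the Markov bound
  -- on `{m ^ θ ≤ X}` to be `o(m ^ (-s))`.
  obtain ⟨θ, hsθ, hθ⟩ := exists_between ((div_lt_one hκ).2 hsκ)
  rw [div_lt_iff₀ hκ] at hsθ
  have hequiv := isEquivalent_sub_rpow_id hθ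
  have hcut : Tendsto (fun m : ℝ ↦ m - m ^ θ) atTop atTop := hequiv.symm.tendsto_atTop tendsto_id
  have hratio : Tendsto (fun m : ℝ ↦ (m / (m - m ^ θ)) ^ s) atTop (nhds 1) := by
    have h := (isEquivalent_iff_tendsto_one (hcut.eventually_ne_atTop 0)).1 hequiv.symm
    simpa only [Pi.div_apply, one_rpow] using! h.rpow_const (p := s) (Or.inl one_ne_zero)
  have hmain : Tendsto
      (fun m ↦ m ^ s * ∫ ω in {ω | m - m ^ θ < Y ω}, W ω ∂μ) atTop (nhds c) := by
    have h := hratio.mul (hY.comp hcut)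
    rw [one_mul] at h
    refine h.congr' ?_
    filter_upwards [eventually_gt_atTop 0, hcut.eventually_gt_atTop 0] with m hm hm'
    rw [Function.comp_apply, div_rpow hm.le hm'.le, ← mul_assoc,
      div_mul_cancel₀ _ (rpow_pos_of_pos hm' s).ne']
  have herror : Tendsto (fun m : ℝ ↦ m ^ (-(θ * κ - s)) * ∫ ω, W ω * X ω ^ κ ∂μ) atTop
      (nhds 0) := by
    simpa only [zero_mul] using (tendsto_rpow_neg_atTop (sub_pos.2 hsθ)).mul_const _
  have hupper := hmain.add herror
  rw [add_zero] at hupper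
  refine tendsto_of_tendsto_of_tendsto_of_le_of_le' hY hupper ?_ ?_
  · filter_upwards [eventually_ge_atTop 0] with m hm
    gcongr m ^ s * ?_
    exact setIntegral_lt_le_setIntegral_lt_add hW hX hWint m
  · filter_upwards [eventually_gt_atTop 0] with m hm
    have hpow : m ^ (-(θ * κ - s)) = m ^ s * (m ^ θ) ^ (-κ) := by
      rw [← rpow_mul hm.le, ← rpow_add hm]
      congr 1
      ring
    rw [hpow, mul_assoc, ← mul_add]
    gcongr m ^ s * ?_
    exact setIntegral_lt_add_le hW hX hXm hWint hWX hκ.le (rpow_pos_of_pos hm θ) m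

end TailOfSum

section Moments

variable {a α q r t y : ℝ}

lemma lintegral_rpow_mul_gammaPDF (ha : 0 < a) (haq : 0 < a + q) (hr : 0 < r) :
    ∫⁻ g, ENNReal.ofReal (g ^ q) * gammaPDF a r g =
      ENNReal.ofReal (Gamma (a + q) / Gamma a * r ^ (-q)) := by
  have htilt : ∀ᵐ g : ℝ, ENNReal.ofReal (g ^ q) * gammaPDF a r g =
      ENNReal.ofReal (Gamma (a + q) / Gamma a * r ^ (-q)) * gammaPDF (a + q) r g := by
    filter_upwards [Measure.ae_ne volume 0] with g hg
    rcases hg.lt_or_gt with hneg | hpos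
    · simp only [gammaPDF_of_neg hneg, mul_zero]
    · rw [gammaPDF_of_nonneg hpos.le, gammaPDF_of_nonneg hpos.le,
        ← ENNReal.ofReal_mul (by positivity), ← ENNReal.ofReal_mul (by positivity),
        add_sub_right_comm, rpow_add hpos, rpow_add hr, rpow_neg hr.le]
      congr 1
      field_simp
  rw [lintegral_congr_ae htilt, lintegral_const_mul' _ _ ENNReal.ofReal_ne_top,
    lintegral_gammaPDF_eq_one haq hr, mul_one]

lemma gammaPDF_two_of_nonpos {g : ℝ} (hg : g ≤ 0) : gammaPDF 2 r g = 0 := by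
  rcases hg.lt_or_eq with hneg | rfl
  · exact gammaPDF_of_neg hneg
  · norm_num [gammaPDF_eq]

lemma setLIntegral_Ioi_paretoPDF (ht : 0 < t) (hα : 0 < α) :
    ∫⁻ x in Set.Ioi t, paretoPDF t α x = 1 := by
  have hsplit := lintegral_add_compl (μ := volume) (paretoPDF t α) (measurableSet_Ici (a := t))
  rwa [Set.compl_Ici, lintegral_paretoPDF_of_le le_rfl, add_zero, lintegral_paretoPDF_eq_one ht hα,
    ← setLIntegral_congr Ioi_ae_eq_Ici] at hsplit

lemma setLIntegral_Ioi_rpow_mul_paretoPDF (ht : 0 < t) (hα : 0 < α) (hrα : r < α)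
    (hty : t ≤ y) :
    ∫⁻ x in Set.Ioi y, ENNReal.ofReal (x ^ r) * paretoPDF t α x =
      ENNReal.ofReal (α * t ^ α / (α - r) * y ^ (-(α - r))) := by
  have hy : 0 < y := ht.trans_le hty
  have hαr : 0 < α - r := sub_pos.2 hrα
  have htilt : ∀ x ∈ Set.Ioi y, ENNReal.ofReal (x ^ r) * paretoPDF t α x =
      ENNReal.ofReal (α * t ^ α / (α - r) * y ^ (-(α - r))) * paretoPDF y (α - r) x := by
    intro x (hx : y < x)
    have hx0 : 0 < x := hy.trans hx
    rw [paretoPDF_of_le (hty.trans hx.le), paretoPDF_of_le hx.le,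
      ← ENNReal.ofReal_mul (by positivity), ← ENNReal.ofReal_mul (by positivity),
      show -(α - r + 1) = r + -(α + 1) by ring, rpow_add hx0, rpow_neg hy.le]
    congr 1
    field_simp
  rw [setLIntegral_congr_fun measurableSet_Ioi htilt,
    lintegral_const_mul' _ _ ENNReal.ofReal_ne_top, setLIntegral_Ioi_paretoPDF hy hαr, mul_one]

end Moments

/-- The joint law of `(G, ξ)` disintegrated along `ξ`: `ξ` is Pareto with scale `η` and rate `α`,
and given `ξ = x` the variable `G` is gamma with shape `2` and rate `(x / η) ^ α`. With `α = b - 1`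
this is the model where `G` is exponential and `ξ` is drawn given `G`. -/
noncomputable def paretoGammaLaw (η α : ℝ) : Measure (ℝ × ℝ) :=
  volume.withDensity fun p ↦ paretoPDF η α p.2 * gammaPDF 2 ((p.2 / η) ^ α) p.1

/-- The constant `C` in `E[G ^ q * ξ ^ r; ξ > y] = C * y ^ (-(α * (q + 1) - r))` under
`paretoGammaLaw η α`, where `r < α * (q + 1)`. -/
noncomputable def tailMomentConst (η α q r : ℝ) : ℝ :=
  Gamma (2 + q) * (α * η ^ (α * (q + 1))) / (α * (q + 1) - r)

lemma measurable_paretoGammaLaw_density (η α : ℝ) :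
    Measurable fun p : ℝ × ℝ ↦ paretoPDF η α p.2 * gammaPDF 2 ((p.2 / η) ^ α) p.1 := by
  refine Measurable.mul ((measurable_paretoPDFReal η α).comp measurable_snd).ennreal_ofReal ?_
  refine (Measurable.ite (measurableSet_le measurable_const measurable_fst) ?_
    measurable_const).ennreal_ofReal
  fun_prop

section ParetoGammaLaw

variable {η α q r y : ℝ}

lemma ae_snd_ne (c : ℝ) : ∀ᵐ p : ℝ × ℝ, p.2 ≠ c :=
  Measure.quasiMeasurePreserving_snd.ae (Measure.ae_ne volume c)

lemma ae_paretoGammaLaw_pos_and_lt (η α : ℝ) :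
    ∀ᵐ p ∂paretoGammaLaw η α, 0 < p.1 ∧ η < p.2 := by
  rw [paretoGammaLaw, ae_withDensity_iff (measurable_paretoGammaLaw_density η α)]
  filter_upwards [ae_snd_ne η] with p hne hdensity
  obtain ⟨hpareto, hgamma⟩ := mul_ne_zero_iff.1 hdensity
  constructor
  · contrapose! hgamma
    exact gammaPDF_two_of_nonpos hgamma
  · contrapose! hpareto
    exact paretoPDF_of_lt (hpareto.lt_of_ne hne)

lemma ae_paretoGammaLaw_rpow_mul_rpow_nonneg (hη : 0 ≤ η) :
    ∀ᵐ p ∂paretoGammaLaw η α, 0 ≤ p.1 ^ q * p.2 ^ r := by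
  filter_upwards [ae_paretoGammaLaw_pos_and_lt η α] with p hp
  exact mul_nonneg (rpow_nonneg hp.1.le q) (rpow_nonneg (hη.trans hp.2.le) r)

lemma lintegral_paretoPDF_mul_gammaPDF_mul_rpow {x : ℝ} (hη : 0 < η) (hq : -2 < q) (hx : 0 < x) :
    ∫⁻ g, paretoPDF η α x * gammaPDF 2 ((x / η) ^ α) g * ENNReal.ofReal (g ^ q * x ^ r) =
      ENNReal.ofReal (Gamma (2 + q) * η ^ (α * q)) *
        (ENNReal.ofReal (x ^ (r - α * q)) * paretoPDF η α x) := by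
  have hΓ : 0 < Gamma (2 + q) := Gamma_pos_of_pos (by linarith)
  have hrate : ((x / η) ^ α) ^ (-q) * x ^ r = η ^ (α * q) * x ^ (r - α * q) := by
    rw [← rpow_mul (by positivity), div_rpow hx.le hη.le, mul_neg, rpow_neg hx.le, rpow_neg hη.le,
      rpow_sub hx]
    field_simp
  calc ∫⁻ g, paretoPDF η α x * gammaPDF 2 ((x / η) ^ α) g * ENNReal.ofReal (g ^ q * x ^ r)
      = ∫⁻ g, paretoPDF η α x * ENNReal.ofReal (x ^ r) *
          (ENNReal.ofReal (g ^ q) * gammaPDF 2 ((x / η) ^ α) g) := by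
        refine lintegral_congr fun g ↦ ?_
        rw [ENNReal.ofReal_mul' (by positivity)]
        ring
    _ = paretoPDF η α x * ENNReal.ofReal (x ^ r) *
          ENNReal.ofReal (Gamma (2 + q) * ((x / η) ^ α) ^ (-q)) := by
        have hfinite : paretoPDF η α x * ENNReal.ofReal (x ^ r) ≠ ⊤ :=
          ENNReal.mul_ne_top ENNReal.ofReal_ne_top ENNReal.ofReal_ne_top
        rw [lintegral_const_mul' _ _ hfinite, lintegral_rpow_mul_gammaPDF two_pos (by linarith)
          (by positivity), Gamma_two, div_one]
    _ = paretoPDF η α x * ENNReal.ofReal (Gamma (2 + q) * (((x / η) ^ α) ^ (-q) * x ^ r)) := by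
        rw [mul_assoc, ← ENNReal.ofReal_mul (by positivity)]
        ring_nf
    _ = _ := by
        rw [hrate, ← mul_assoc, ENNReal.ofReal_mul (by positivity)]
        ring

lemma setLIntegral_rpow_mul_rpow_paretoGammaLaw (hη : 0 < η) (hα : 0 < α) (hq : -2 < q)
    (hr : r < α * (q + 1)) (hy : η ≤ y) :
    ∫⁻ p in {p | y < p.2}, ENNReal.ofReal (p.1 ^ q * p.2 ^ r) ∂paretoGammaLaw η α =
      ENNReal.ofReal (tailMomentConst η α q r * y ^ (-(α * (q + 1) - r))) := by
  have hy0 : 0 < y := hη.trans_le hy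
  have hΓ : 0 < Gamma (2 + q) := Gamma_pos_of_pos (by linarith)
  have hstrip : {p : ℝ × ℝ | y < p.2} = Set.univ ×ˢ Set.Ioi y := by ext; simp
  have hmoment : Measurable fun p : ℝ × ℝ ↦ ENNReal.ofReal (p.1 ^ q * p.2 ^ r) := by fun_prop
  have hdensity := measurable_paretoGammaLaw_density η α
  rw [paretoGammaLaw, setLIntegral_withDensity_eq_setLIntegral_mul _ hdensity hmoment
      (measurableSet_lt measurable_const measurable_snd), hstrip, Measure.volume_eq_prod,
    setLIntegral_prod_symm _ (hdensity.mul hmoment).aemeasurable, Measure.restrict_univ]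
  simp only [Pi.mul_apply]
  rw [setLIntegral_congr_fun measurableSet_Ioi fun x (hx : y < x) ↦
      lintegral_paretoPDF_mul_gammaPDF_mul_rpow hη hq (hy0.trans hx),
    lintegral_const_mul' _ _ ENNReal.ofReal_ne_top,
    setLIntegral_Ioi_rpow_mul_paretoPDF hη hα (by linarith) hy,
    ← ENNReal.ofReal_mul (by positivity), tailMomentConst,
    show α - (r - α * q) = α * (q + 1) - r by ring,
    show α * (q + 1) = α * q + α by ring, rpow_add hη]
  congr 1
  ring

lemma integrable_rpow_mul_rpow_paretoGammaLaw (hη : 0 < η) (hα : 0 < α) (hq : -2 < q)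
    (hr : r < α * (q + 1)) :
    Integrable (fun p ↦ p.1 ^ q * p.2 ^ r) (paretoGammaLaw η α) := by
  have hsupport : (paretoGammaLaw η α).restrict {p | η < p.2} = paretoGammaLaw η α :=
    Measure.restrict_eq_self_of_ae_mem
      ((ae_paretoGammaLaw_pos_and_lt η α).mono fun _ hp ↦ hp.2)
  refine ⟨by fun_prop, ?_⟩
  rw [hasFiniteIntegral_iff_ofReal (ae_paretoGammaLaw_rpow_mul_rpow_nonneg hη.le), ← hsupport,
    setLIntegral_rpow_mul_rpow_paretoGammaLaw hη hα hq hr le_rfl]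
  exact ENNReal.ofReal_lt_top

lemma tailMomentConst_pos (hη : 0 < η) (hα : 0 < α) (hq : -2 < q) (hr : r < α * (q + 1)) :
    0 < tailMomentConst η α q r :=
  div_pos (mul_pos (Gamma_pos_of_pos (by linarith)) (by positivity)) (sub_pos.2 hr)

lemma tailMomentConst_zero_zero (hα : α ≠ 0) : tailMomentConst η α 0 0 = η ^ α := by
  simp only [tailMomentConst, add_zero, zero_add, mul_one, sub_zero, Gamma_two, one_mul]
  field_simp

lemma tailMomentConst_one_zero (hη : 0 < η) (hα : α ≠ 0) :
    tailMomentConst η α 1 0 = η ^ α * η ^ α := by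
  have hΓ : Gamma (2 + 1) = 2 := by rw [Gamma_add_one two_ne_zero, Gamma_two, mul_one]
  rw [tailMomentConst, hΓ, mul_add, mul_one, rpow_add hη]
  field_simp
  ring

lemma tailMomentConst_zero_one : tailMomentConst η α 0 1 = α / (α - 1) * η ^ α := by
  simp only [tailMomentConst, add_zero, zero_add, mul_one, Gamma_two, one_mul]
  ring

lemma setIntegral_rpow_mul_rpow_paretoGammaLaw (hη : 0 < η) (hα : 0 < α) (hq : -2 < q)
    (hr : r < α * (q + 1)) (hy : η ≤ y) :
    ∫ p in {p | y < p.2}, p.1 ^ q * p.2 ^ r ∂paretoGammaLaw η α =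
      tailMomentConst η α q r * y ^ (-(α * (q + 1) - r)) := by
  have hC := tailMomentConst_pos hη hα hq hr
  have hy0 : 0 < y := hη.trans_le hy
  rw [integral_eq_lintegral_of_nonneg_ae
      (ae_restrict_of_ae (ae_paretoGammaLaw_rpow_mul_rpow_nonneg hη.le)) (by fun_prop),
    setLIntegral_rpow_mul_rpow_paretoGammaLaw hη hα hq hr hy, ENNReal.toReal_ofReal (by positivity)]

theorem tendsto_rpow_mul_setIntegral_lt_add_paretoGammaLaw (hη : 0 < η) (hα : 0 < α) (hq : -2 < q)
    (hr : r < α * (q + 1)) :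
    Tendsto (fun m ↦ m ^ (α * (q + 1) - r) *
        ∫ p in {p | m < p.1 + p.2}, p.1 ^ q * p.2 ^ r ∂paretoGammaLaw η α)
      atTop (nhds (tailMomentConst η α q r)) := by
  set s := α * (q + 1) - r with hs
  have hs0 : 0 < s := sub_pos.2 hr
  have hpos := ae_paretoGammaLaw_pos_and_lt η α
  have hmoment : Integrable (fun p ↦ p.1 ^ q * p.2 ^ r * p.1 ^ (s + 1)) (paretoGammaLaw η α) := by
    have hqs : r < α * (q + (s + 1) + 1) := by nlinarith [mul_pos hα hs0]
    refine (integrable_rpow_mul_rpow_paretoGammaLaw hη hα (by linarith) hqs).congr ?_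
    filter_upwards [hpos] with p hp
    rw [rpow_add hp.1]
    ring
  refine tendsto_rpow_mul_setIntegral_lt_add (ae_paretoGammaLaw_rpow_mul_rpow_nonneg hη.le)
    (hpos.mono fun p hp ↦ hp.1.le) measurable_fst.aemeasurable
    (integrable_rpow_mul_rpow_paretoGammaLaw hη hα hq hr) hmoment (by linarith) (lt_add_one s)
    (tendsto_const_nhds.congr' ?_)
  filter_upwards [eventually_ge_atTop η] with y hy
  have hys : y ^ s ≠ 0 := (rpow_pos_of_pos (hη.trans_le hy) s).ne'
  rw [setIntegral_rpow_mul_rpow_paretoGammaLaw hη hα hq hr hy, ← hs, rpow_neg (hη.le.trans hy)]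
  field_simp

theorem isEquivalent_condMoment_paretoGammaLaw (hη : 0 < η) (hα : 0 < α) (hq : -2 < q)
    (hr : r < α * (q + 1)) :
    (fun m ↦ (∫ p in {p | m < p.1 + p.2}, p.1 ^ q * p.2 ^ r ∂paretoGammaLaw η α) /
        (paretoGammaLaw η α).real {p | m < p.1 + p.2})
      ~[atTop] fun m ↦ tailMomentConst η α q r / η ^ α * m ^ (r - α * q) := by
  have hC := tailMomentConst_pos hη hα hq hr
  have hηα : 0 < η ^ α := rpow_pos_of_pos hη α
  have hnum := tendsto_rpow_mul_setIntegral_lt_add_paretoGammaLaw hη hα hq hr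
  have hden := tendsto_rpow_mul_setIntegral_lt_add_paretoGammaLaw (q := 0) (r := 0) hη hα
    (by norm_num) (by simpa using hα)
  simp only [tailMomentConst_zero_zero hα.ne', rpow_zero, mul_one, zero_add, sub_zero,
    setIntegral_const, smul_eq_mul] at hden
  refine isEquivalent_of_tendsto_one ?_
  have hlim := (hnum.div hden hηα.ne').div_const (tailMomentConst η α q r / η ^ α)
  rw [div_self (div_pos hC hηα).ne'] at hlim
  refine hlim.congr' ?_
  filter_upwards [eventually_gt_atTop 0] with m hm
  have hpow : m ^ (α * (q + 1) - r) = m ^ α / m ^ (r - α * q) := by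
    rw [← rpow_sub hm]
    congr 1
    ring
  simp only [Pi.div_apply, hpow]
  field_simp

end ParetoGammaLaw

lemma paretoPDF_mul_gammaPDF_two {η α g x : ℝ} (hη : 0 < η) (hα : 0 < α) (hg : 0 ≤ g)
    (hx : η ≤ x) :
    paretoPDF η α x * gammaPDF 2 ((x / η) ^ α) g =
      ENNReal.ofReal (exp (-g) *
        (g * exp (-g * ((x / η) ^ α - 1)) * x ^ (α - 1) / η ^ α * α)) := by
  have hx0 : 0 < x := hη.trans_le hx
  have hexp : exp (-((x / η) ^ α * g)) = exp (-g) * exp (-g * ((x / η) ^ α - 1)) := by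
    rw [← exp_add]
    ring_nf
  have hpow : x ^ (-(α + 1)) * (x ^ α) ^ 2 = x ^ (α - 1) := by
    rw [← rpow_natCast, ← rpow_mul hx0.le, ← rpow_add hx0]
    norm_num
    ring_nf
  rw [paretoPDF_of_le hx, gammaPDF_of_nonneg hg, ← ENNReal.ofReal_mul (by positivity), Gamma_two,
    rpow_two, div_one, hexp, ← hpow, div_rpow hx0.le hη.le, show (2 : ℝ) - 1 = 1 by norm_num,
    rpow_one]
  congr 1
  field_simp

lemma withDensity_eq_paretoGammaLaw {η b : ℝ} (hη : 0 < η) (hb : 1 < b) :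
    (volume : Measure (ℝ × ℝ)).withDensity (fun p ↦
      ENNReal.ofReal (if 0 < p.1 ∧ η < p.2 then
        exp (-p.1) * (p.1 * exp (-p.1 * ((p.2 / η) ^ (b - 1) - 1)) *
          p.2 ^ (b - 2) / η ^ (b - 1) * (b - 1))
      else 0)) = paretoGammaLaw η (b - 1) := by
  refine withDensity_congr_ae ?_
  filter_upwards [ae_snd_ne η] with p hne
  split_ifs with hp
  · rw [paretoPDF_mul_gammaPDF_two hη (sub_pos.2 hb) hp.1.le hp.2.le,
      show b - 1 - 1 = b - 2 by ring]
  · rw [ENNReal.ofReal_zero, eq_comm, mul_eq_zero]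
    rcases not_and_or.1 hp with hg | hx
    · exact Or.inr (gammaPDF_two_of_nonpos (not_lt.1 hg))
    · exact Or.inl (paretoPDF_of_lt ((not_lt.1 hx).lt_of_ne hne))

lemma condExpEvent_comp_preimage {Ω E : Type*} [MeasureSpace Ω] [MeasurableSpace E] {Z : Ω → E}
    {f : E → ℝ} {s : Set E} (hZ : Measurable Z) (hf : Measurable f) (hs : MeasurableSet s) :
    condExpEvent (fun ω ↦ f (Z ω)) (Z ⁻¹' s) =
      (∫ z in s, f z ∂Measure.map Z ℙ) / (Measure.map Z ℙ).real s := by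
  rw [condExpEvent, setIntegral_map hs hf.aestronglyMeasurable hZ.aemeasurable,
    map_measureReal_apply hZ hs, measureReal_def]

section Conditional

variable {Ω : Type*} [MeasureSpace Ω] {G ξ : Ω → ℝ} {η α q r : ℝ}

theorem isEquivalent_condExpEvent_rpow_mul_rpow (hG : Measurable G) (hξ : Measurable ξ)
    (hη : 0 < η) (hα : 0 < α)
    (hlaw : Measure.map (fun ω ↦ (G ω, ξ ω)) ℙ = paretoGammaLaw η α) (hq : -2 < q)
    (hr : r < α * (q + 1)) :
    (fun m ↦ condExpEvent (fun ω ↦ G ω ^ q * ξ ω ^ r) {ω | m < G ω + ξ ω})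
      ~[atTop] fun m ↦ tailMomentConst η α q r / η ^ α * m ^ (r - α * q) := by
  have h := isEquivalent_condMoment_paretoGammaLaw hη hα hq hr
  simp_rw [← hlaw] at h
  refine h.congr_left (Eventually.of_forall fun m ↦ ?_)
  exact (condExpEvent_comp_preimage (f := fun p : ℝ × ℝ ↦ p.1 ^ q * p.2 ^ r) (hG.prodMk hξ)
    (by fun_prop) (measurableSet_lt measurable_const (by fun_prop))).symm

theorem isEquivalent_condExpEvent_fst (hG : Measurable G) (hξ : Measurable ξ)
    (hη : 0 < η) (hα : 0 < α)
    (hlaw : Measure.map (fun ω ↦ (G ω, ξ ω)) ℙ = paretoGammaLaw η α) :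
    (fun m ↦ condExpEvent G {ω | m < G ω + ξ ω}) ~[atTop] fun m ↦ η ^ α / m ^ α := by
  have h := isEquivalent_condExpEvent_rpow_mul_rpow (q := 1) (r := 0) hG hξ hη hα hlaw
    (by norm_num) (by positivity)
  simp only [rpow_one, rpow_zero, mul_one, zero_sub, tailMomentConst_one_zero hη hα.ne',
    mul_div_cancel_right₀ _ (rpow_pos_of_pos hη α).ne'] at h
  refine h.congr_right ((eventually_ge_atTop 0).mono fun m hm ↦ ?_)
  simp only [rpow_neg hm, div_eq_mul_inv]

theorem isEquivalent_condExpEvent_snd (hG : Measurable G) (hξ : Measurable ξ)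
    (hη : 0 < η) (hα : 1 < α)
    (hlaw : Measure.map (fun ω ↦ (G ω, ξ ω)) ℙ = paretoGammaLaw η α) :
    (fun m ↦ condExpEvent ξ {ω | m < G ω + ξ ω}) ~[atTop] fun m ↦ m * α / (α - 1) := by
  have h := isEquivalent_condExpEvent_rpow_mul_rpow (q := 0) (r := 1) hG hξ hη (by linarith) hlaw
    (by norm_num) (by linarith)
  simp only [rpow_one, rpow_zero, one_mul, mul_zero, sub_zero, tailMomentConst_zero_one,
    mul_div_cancel_right₀ _ (rpow_pos_of_pos hη α).ne'] at h
  refine h.congr_right (Eventually.of_forall fun m ↦ ?_)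
  ring

end Conditional

/-- Strong Goodhart in the exponential-goal/heavy-tailed-discrepancy model (`b > 2`):
`E[G | M > m] ~ η^{b-1}/m^{b-1} → 0` while `E[ξ | M > m] ~ m(b-1)/(b-2) → ∞`. -/
theorem exp_heavy_strong_goodhart {Ω : Type*} [MeasureSpace Ω] [IsProbabilityMeasure (ℙ : Measure Ω)]
    (G ξ : Ω → ℝ) (hG : Measurable G) (hξ : Measurable ξ) (η b : ℝ) (hη : 0 < η)
    (hlaw : Measure.map (fun ω => (G ω, ξ ω)) ℙ =
      (volume : Measure (ℝ × ℝ)).withDensity (fun p =>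
        ENNReal.ofReal (if 0 < p.1 ∧ η < p.2 then
          Real.exp (-p.1) *
            (p.1 * Real.exp (-p.1 * ((p.2 / η) ^ (b - 1) - 1)) *
              p.2 ^ (b - 2) / η ^ (b - 1) * (b - 1))
        else 0))) (hb : 2 < b) :
    ((fun m : ℝ => condExpEvent G {ω | m < G ω + ξ ω})
        ~[atTop] (fun m : ℝ => η ^ (b - 1) / m ^ (b - 1))) ∧
    Tendsto (fun m : ℝ => condExpEvent G {ω | m < G ω + ξ ω}) atTop (nhds 0) ∧
    ((fun m : ℝ => condExpEvent ξ {ω | m < G ω + ξ ω})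
        ~[atTop] (fun m : ℝ => m * (b - 1) / (b - 2))) ∧
    Tendsto (fun m : ℝ => condExpEvent ξ {ω | m < G ω + ξ ω}) atTop atTop := by
  have hα : 0 < b - 1 := by linarith
  have hb2 : 0 < b - 2 := by linarith
  rw [withDensity_eq_paretoGammaLaw hη (by linarith)] at hlaw
  have hgoal := isEquivalent_condExpEvent_fst hG hξ hη hα hlaw
  have hdiscrepancy := isEquivalent_condExpEvent_snd hG hξ hη (by linarith) hlaw
  rw [show b - 1 - 1 = b - 2 by ring] at hdiscrepancy
  refine ⟨hgoal, hgoal.symm.tendsto_nhds ?_, hdiscrepancy, hdiscrepancy.symm.tendsto_atTop ?_⟩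
  · exact (tendsto_rpow_atTop hα).const_div_atTop _
  · simpa only [mul_div_assoc, id] using tendsto_id.atTop_mul_const (div_pos hα hb2)
end
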